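/- Let u : [0,2π)² → ℝ² be measurable with ‖u‖_{L^{2,1}} := ∫_0^∞ ( vol{ x ∈ [0,2π)² : |u(x)| > λ } )^{1/2} dλ < ∞. If u has mean value zero, is weakly divergence-free, and is a weak steady solution of the 2D Navier–Stokes equations, then u = 0 almost everywhere. -/

import Mathlib

open MeasureTheory Real
open scoped ENNReal

noncomputable section

/-- Partial derivative `∂_i f` of a scalar function on `ℝ^d`. -/
def pd (d : ℕ) (i : Fin d) (f : (Fin d → ℝ) → ℝ) (x : Fin d → ℝ) : ℝ :=
  fderiv ℝ f x (Pi.single i 1)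

/-- Divergence of a vector field on `ℝ^d`. -/
def divg (d : ℕ) (u : (Fin d → ℝ) → (Fin d → ℝ)) (x : Fin d → ℝ) : ℝ :=
  ∑ i, pd d i (fun y => u y i) x

/-- Laplacian of a scalar function on `ℝ^d`. -/
def lap (d : ℕ) (f : (Fin d → ℝ) → ℝ) (x : Fin d → ℝ) : ℝ :=
  ∑ i, pd d i (pd d i f) x

/-- `(2πℤ)^d`-periodicity. -/
def PerF {α : Type*} (d : ℕ) (f : (Fin d → ℝ) → α) : Prop :=
  ∀ (x : Fin d → ℝ) (k : Fin d → ℤ), f (x + fun i => 2 * π * (k i : ℝ)) = f x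

/-- The fundamental domain `[0,2π)²` of the torus `T²`. -/
def T2 : Set (Fin 2 → ℝ) := Set.Ico 0 (fun _ => 2 * π)

/-- Euclidean norm on `ℝ²`. -/
def enorm2 (x : Fin 2 → ℝ) : ℝ := Real.sqrt (x 0 ^ 2 + x 1 ^ 2)

/-- The Lorentz `L^{2,1}` functional `∫_0^∞ (vol{x ∈ [0,2π)² : |f(x)| > λ})^{1/2} dλ`. -/
def L21 (f : (Fin 2 → ℝ) → (Fin 2 → ℝ)) : ℝ≥0∞ :=
  ∫⁻ l in Set.Ioi (0 : ℝ), volume {x ∈ T2 | l < enorm2 (f x)} ^ (1 / 2 : ℝ)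


/-! ### One-dimensional Gaussian sums -/

/-- `y^a e^{-y^2}`. -/
def Gf (a : ℕ) (y : ℝ) : ℝ := y ^ a * Real.exp (-y ^ 2)

lemma Gf_hasDerivAt (a : ℕ) (y : ℝ) :
    HasDerivAt (Gf a) (a * Gf (a - 1) y - 2 * Gf (a + 1) y) y := by
  have h1 : HasDerivAt (fun y : ℝ => y ^ a) (a * y ^ (a - 1)) y := hasDerivAt_pow a y
  have h2 : HasDerivAt (fun y : ℝ => -y ^ 2) (-(2 * y)) y := by
    simpa using (hasDerivAt_pow 2 y).fun_neg
  have h3 := h1.mul h2.exp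
  refine h3.congr_deriv ?_
  simp only [Gf]
  ring

lemma Gf_bound0 (n : ℕ) : ∃ C : ℝ, 0 ≤ C ∧ ∀ y : ℝ, |y| ^ n * Real.exp (-y ^ 2) ≤ C := by
  refine ⟨1 + n.factorial, by positivity, fun y => ?_⟩
  have hexp : Real.exp (-y ^ 2) ≤ 1 := by
    rw [Real.exp_le_one_iff]; nlinarith [sq_nonneg y]
  have h1 : |y| ^ n ≤ 1 + (y ^ 2) ^ n := by
    rcases le_total |y| 1 with h | h
    · have := pow_le_one₀ (n := n) (abs_nonneg y) h
      have : 0 ≤ (y ^ 2) ^ n := by positivity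
      linarith
    · have : |y| ^ n ≤ (|y| ^ 2) ^ n := by
        apply pow_le_pow_left₀ (abs_nonneg y); nlinarith
      rw [sq_abs] at this; linarith
  have h2 : (y ^ 2) ^ n * Real.exp (-y ^ 2) ≤ n.factorial := by
    have := Real.pow_div_factorial_le_exp (y ^ 2) (sq_nonneg y) n
    rw [div_le_iff₀ (by positivity)] at this
    rw [Real.exp_neg, ← div_eq_mul_inv, div_le_iff₀ (Real.exp_pos _)]
    linarith
  calc |y| ^ n * Real.exp (-y ^ 2) ≤ (1 + (y ^ 2) ^ n) * Real.exp (-y ^ 2) := by gcongr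
    _ ≤ 1 + n.factorial := by nlinarith [Real.exp_pos (-y ^ 2)]

lemma Gf_bound (a : ℕ) : ∃ C : ℝ, 0 ≤ C ∧ ∀ y : ℝ, |Gf a y| * (1 + |y|) ^ 2 ≤ C := by
  obtain ⟨C0, h0, H0⟩ := Gf_bound0 a
  obtain ⟨C1, h1, H1⟩ := Gf_bound0 (a + 1)
  obtain ⟨C2, h2, H2⟩ := Gf_bound0 (a + 2)
  refine ⟨C0 + 2 * C1 + C2, by positivity, fun y => ?_⟩
  have : |Gf a y| * (1 + |y|) ^ 2 = |y| ^ a * Real.exp (-y ^ 2)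
    + 2 * (|y| ^ (a + 1) * Real.exp (-y ^ 2)) + |y| ^ (a + 2) * Real.exp (-y ^ 2) := by
    rw [Gf, abs_mul, abs_pow, abs_of_pos (Real.exp_pos _)]; ring
  rw [this]
  linarith [H0 y, H1 y, H2 y]

/-- Second derivative of `Gf`. -/
def Gf2 (a : ℕ) (y : ℝ) : ℝ :=
  a * ((a - 1 : ℕ) * Gf (a - 1 - 1) y - 2 * Gf (a - 1 + 1) y)
    - 2 * ((a + 1 : ℕ) * Gf (a + 1 - 1) y - 2 * Gf (a + 1 + 1) y)

lemma Gf2_bound (a : ℕ) : ∃ C : ℝ, 0 ≤ C ∧ ∀ y : ℝ, |Gf2 a y| * (1 + |y|) ^ 2 ≤ C := by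
  obtain ⟨C0, h0, H0⟩ := Gf_bound (a - 1 - 1)
  obtain ⟨C1, h1, H1⟩ := Gf_bound (a - 1 + 1)
  obtain ⟨C2, h2, H2⟩ := Gf_bound (a + 1 - 1)
  obtain ⟨C3, h3, H3⟩ := Gf_bound (a + 1 + 1)
  refine ⟨a * ((a - 1 : ℕ) * C0 + 2 * C1) + 2 * ((a + 1 : ℕ) * C2 + 2 * C3), by positivity,
    fun y => ?_⟩
  have : |Gf2 a y| ≤ a * ((a - 1 : ℕ) * |Gf (a - 1 - 1) y| + 2 * |Gf (a - 1 + 1) y|)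
    + 2 * ((a + 1 : ℕ) * |Gf (a + 1 - 1) y| + 2 * |Gf (a + 1 + 1) y|) := by
    unfold Gf2
    refine (abs_sub _ _).trans ?_
    rw [abs_mul, abs_mul, Nat.abs_cast, abs_two]
    gcongr
    · refine (abs_sub _ _).trans ?_
      rw [abs_mul, abs_mul, Nat.abs_cast, abs_two]
    · refine (abs_sub _ _).trans ?_
      rw [abs_mul, abs_mul, Nat.abs_cast, abs_two]
  calc _ ≤ _ := mul_le_mul_of_nonneg_right this (by positivity)
    _ = a * ((a - 1 : ℕ) * (|Gf (a - 1 - 1) y| * (1 + |y|) ^ 2)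
          + 2 * (|Gf (a - 1 + 1) y| * (1 + |y|) ^ 2))
        + 2 * ((a + 1 : ℕ) * (|Gf (a + 1 - 1) y| * (1 + |y|) ^ 2)
          + 2 * (|Gf (a + 1 + 1) y| * (1 + |y|) ^ 2)) := by ring
    _ ≤ _ := by
      gcongr
      exacts [H0 y, H1 y, H2 y, H3 y]

lemma Gf_second_diff (a : ℕ) : ∃ C : ℝ, 0 ≤ C ∧ ∀ y h : ℝ, 0 ≤ h → h ≤ 2 →
    |Gf a (y + h) + Gf a (y - h) - 2 * Gf a y| * (1 + |y|) ^ 2 ≤ C * h ^ 2 := by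
  obtain ⟨C, hC, H⟩ := Gf2_bound a
  refine ⟨18 * C, by positivity, fun y h h0 h2 => ?_⟩
  set B : ℝ := 9 * C / (1 + |y|) ^ 2 with hB
  have hB0 : 0 ≤ B := by positivity
  have key : ∀ z, |z - y| ≤ h → |Gf2 a z| ≤ B := by
    intro z hz
    have h1 : 1 + |y| ≤ 3 * (1 + |z|) := by
      have : |y| ≤ |z| + |z - y| := by
        have := abs_sub_abs_le_abs_sub y z
        rw [abs_sub_comm] at this; linarith
      have := abs_nonneg z
      linarith
    have h3 : (1 + |y|) ^ 2 ≤ 9 * (1 + |z|) ^ 2 := by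
      have := pow_le_pow_left₀ (by positivity) h1 2
      linarith [this, mul_pow 3 (1 + |z|) 2]
    rw [hB, le_div_iff₀ (by positivity)]
    calc |Gf2 a z| * (1 + |y|) ^ 2 ≤ |Gf2 a z| * (9 * (1 + |z|) ^ 2) := by gcongr
      _ ≤ 9 * C := by linarith [H z]
  set g' : ℝ → ℝ := fun z => a * Gf (a - 1) z - 2 * Gf (a + 1) z with hg'
  have hd2 : ∀ z, HasDerivAt g' (Gf2 a z) z := by
    intro z
    exact ((Gf_hasDerivAt (a - 1) z).const_mul _).sub ((Gf_hasDerivAt (a + 1) z).const_mul _)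
  have hg'lip : ∀ s, 0 ≤ s → s ≤ h → |g' (y + s) - g' (y - s)| ≤ B * (2 * h) := by
    intro s hs0 hsh
    have := (convex_Icc (y - s) (y + s)).norm_image_sub_le_of_norm_hasDerivWithin_le
      (f := g') (f' := Gf2 a) (C := B) (x := y - s) (y := y + s)
      (fun z _ => (hd2 z).hasDerivWithinAt)
      (fun z hz => key z (by rw [abs_le]; constructor <;> linarith [hz.1, hz.2]))
      ⟨le_refl _, by linarith⟩ ⟨by linarith, le_refl _⟩
    rw [Real.norm_eq_abs, Real.norm_eq_abs] at this
    refine this.trans ?_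
    gcongr
    rw [abs_le]; constructor <;> linarith
  set D : ℝ → ℝ := fun s => Gf a (y + s) + Gf a (y - s) - 2 * Gf a y with hD
  have hDd : ∀ s, HasDerivAt D (g' (y + s) - g' (y - s)) s := by
    intro s
    have e1 : HasDerivAt (fun s => Gf a (y + s)) (g' (y + s)) s :=
      HasDerivAt.comp_const_add y s (Gf_hasDerivAt a (y + s))
    have e2 : HasDerivAt (fun s => Gf a (y - s)) (-g' (y - s)) s :=
      HasDerivAt.comp_const_sub y s (Gf_hasDerivAt a (y - s))
    have := (e1.add e2).sub_const (2 * Gf a y)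
    rw [sub_eq_add_neg]
    exact this
  have hfin := (convex_Icc 0 h).norm_image_sub_le_of_norm_hasDerivWithin_le
      (f := D) (f' := fun s => g' (y + s) - g' (y - s)) (C := B * (2 * h)) (x := 0) (y := h)
      (fun z _ => (hDd z).hasDerivWithinAt)
      (fun z hz => hg'lip z hz.1 hz.2)
      ⟨le_refl _, h0⟩ ⟨h0, le_refl _⟩
  have hD0 : D 0 = 0 := by simp [hD]; ring
  rw [hD0, sub_zero, sub_zero, Real.norm_eq_abs, Real.norm_eq_abs, abs_of_nonneg h0] at hfin
  calc |D h| * (1 + |y|) ^ 2 ≤ (B * (2 * h) * h) * (1 + |y|) ^ 2 := by gcongr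
    _ = 18 * C * h ^ 2 := by rw [hB]; field_simp; ring

lemma sum_weight_nat (h : ℝ) (hh : 0 < h) (N : ℕ) :
    ∑ k ∈ Finset.range N, h / (1 + h * (k + 1 : ℝ)) ^ 2 ≤ 1 - 1 / (1 + h * N) := by
  induction N with
  | zero => simp
  | succ n ih =>
    rw [Finset.sum_range_succ]
    have h1 : (0 : ℝ) < 1 + h * n := by positivity
    have h2 : (0 : ℝ) < 1 + h * (n + 1) := by positivity
    have : h / (1 + h * (n + 1 : ℝ)) ^ 2 ≤ 1 / (1 + h * n) - 1 / (1 + h * (n + 1)) := by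
      rw [div_sub_div _ _ h1.ne' h2.ne', div_le_div_iff₀ (by positivity) (by positivity)]
      have : (1 * (1 + h * (n + 1)) - (1 + h * n) * 1) = h := by ring
      rw [this]
      have : (1 + h * (n:ℝ)) * (1 + h * (n + 1)) ≤ (1 + h * (n + 1)) ^ 2 := by nlinarith
      nlinarith
    push_cast
    linarith

lemma sum_weight (h : ℝ) (hh : 0 < h) (N : ℕ) :
    ∑ k ∈ Finset.Icc (-(N : ℤ)) N, h / (1 + |h * (k : ℝ)|) ^ 2 ≤ h + 2 := by
  have aux : ∀ N : ℕ, ∑ k ∈ Finset.Icc (-(N : ℤ)) N, h / (1 + |h * (k : ℝ)|) ^ 2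
      = h + 2 * ∑ k ∈ Finset.range N, h / (1 + h * (k + 1 : ℝ)) ^ 2 := by
    intro N
    induction N with
    | zero => simp
    | succ n ih =>
      have hI : Finset.Icc (-((n + 1 : ℕ) : ℤ)) ((n + 1 : ℕ) : ℤ)
          = insert (-((n + 1 : ℕ) : ℤ)) (insert ((n + 1 : ℕ) : ℤ)
            (Finset.Icc (-(n : ℤ)) n)) := by
        ext k; simp only [Finset.mem_Icc, Finset.mem_insert]; omega
      rw [hI, Finset.sum_insert, Finset.sum_insert, ih, Finset.sum_range_succ]
      · have e1 : |h * (((n + 1 : ℕ) : ℤ) : ℝ)| = h * (n + 1) := by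
          push_cast; exact abs_of_pos (by positivity)
        have e2 : |h * ((-((n + 1 : ℕ) : ℤ) : ℤ) : ℝ)| = h * (n + 1) := by
          rw [Int.cast_neg, mul_neg, abs_neg, e1]
        rw [e1, e2]; ring
      · simp
      · simp only [Finset.mem_insert, Finset.mem_Icc]; omega
  rw [aux N]
  have := sum_weight_nat h hh N
  have h3 : (0 : ℝ) ≤ 1 / (1 + h * N) := by positivity
  linarith


/-- Truncated one-dimensional heat-type trigonometric sum. -/
def theta (a N : ℕ) (τ x : ℝ) : ℂ :=
  ∑ k ∈ Finset.Icc (-(N : ℤ)) N,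
    (((k : ℝ) ^ a * Real.exp (-τ * (k : ℝ) ^ 2) : ℝ) : ℂ) * Complex.exp (Complex.I * (k * x))

lemma Icc_succ_insert (n : ℕ) : Finset.Icc (-((n + 1 : ℕ) : ℤ)) ((n + 1 : ℕ) : ℤ)
    = insert (-((n + 1 : ℕ) : ℤ)) (insert ((n + 1 : ℕ) : ℤ) (Finset.Icc (-(n : ℤ)) n)) := by
  ext k; simp only [Finset.mem_Icc, Finset.mem_insert]; omega

lemma sum_Icc_succ (n : ℕ) (f : ℤ → ℂ) :
    ∑ k ∈ Finset.Icc (-((n + 1 : ℕ) : ℤ)) ((n + 1 : ℕ) : ℤ), f k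
      = f (-((n + 1 : ℕ) : ℤ)) + (f ((n + 1 : ℕ) : ℤ) + ∑ k ∈ Finset.Icc (-(n : ℤ)) n, f k) := by
  rw [Icc_succ_insert, Finset.sum_insert, Finset.sum_insert]
  · simp
  · simp only [Finset.mem_insert, Finset.mem_Icc]; omega

lemma abel_two (g e : ℤ → ℂ) (N : ℕ) :
    ∑ k ∈ Finset.Icc (-(N : ℤ)) N, g k * (2 * e k - e (k + 1) - e (k - 1))
      = ∑ k ∈ Finset.Icc (-(N : ℤ)) N, (2 * g k - g (k + 1) - g (k - 1)) * e k
        + (g (N + 1) * e N + g (-N - 1) * e (-N) - g N * e (N + 1) - g (-N) * e (-N - 1)) := by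
  induction N with
  | zero => simp; ring
  | succ n ih =>
    rw [sum_Icc_succ, sum_Icc_succ, ih]
    push_cast
    have e1 : (-(n : ℤ) - 1) = -1 + -(n : ℤ) := by ring
    have e2 : (-((n : ℤ) + 1)) = -1 + -(n : ℤ) := by ring
    have e3 : (-1 + -(n : ℤ) + 1) = -(n : ℤ) := by ring
    have e4 : ((n : ℤ) + 1 - 1) = n := by ring
    simp only [e1, e2, e3, e4]
    ring

lemma theta_bound (a : ℕ) : ∃ C : ℝ, 0 ≤ C ∧ ∀ N : ℕ, 1 ≤ N → ∀ h : ℝ, 0 < h → h ≤ 2 →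
    1 ≤ h ^ 2 * N → ∀ x : ℝ,
    h ^ (a + 1) * (h ^ 2 + (2 - 2 * Real.cos x)) * ‖theta a N (h ^ 2) x‖ ≤ C * h ^ 2 := by
  obtain ⟨C1, hC1, H1⟩ := Gf_bound a
  obtain ⟨C2, hC2, H2⟩ := Gf_second_diff a
  refine ⟨8 * C1 + 4 * C2, by positivity, fun N hN h h0 h2 hhN x => ?_⟩
  set g : ℤ → ℂ := fun k => ((Gf a (h * k) : ℝ) : ℂ) with hg
  set e : ℤ → ℂ := fun k => Complex.exp (Complex.I * (k * x)) with he
  set T : ℂ := ∑ k ∈ Finset.Icc (-(N : ℤ)) N, g k * e k with hT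
  have hen : ∀ k, ‖e k‖ = 1 := by
    intro k
    have : Complex.I * (k * x) = ((k * x : ℝ) : ℂ) * Complex.I := by push_cast; ring
    rw [he]; simp only; rw [this, Complex.norm_exp_ofReal_mul_I]
  have hgn : ∀ k, ‖g k‖ ≤ C1 / (1 + |h * (k : ℝ)|) ^ 2 := by
    intro k
    rw [hg]; simp only; rw [Complex.norm_real, Real.norm_eq_abs, le_div_iff₀ (by positivity)]
    exact H1 _
  have hTth : T = ((h ^ a : ℝ) : ℂ) * theta a N (h ^ 2) x := by
    rw [hT, theta, Finset.mul_sum]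
    refine Finset.sum_congr rfl fun k _ => ?_
    have hG : Gf a (h * k) = h ^ a * ((k : ℝ) ^ a * Real.exp (-h ^ 2 * (k : ℝ) ^ 2)) := by
      unfold Gf
      rw [mul_pow, mul_assoc]; congr 3; ring
    simp only [hg, he, hG]
    rw [Complex.ofReal_mul, mul_assoc]
  have hTn : ‖T‖ = h ^ a * ‖theta a N (h ^ 2) x‖ := by
    rw [hTth, norm_mul, Complex.norm_real, Real.norm_of_nonneg (by positivity)]
  have hW := sum_weight h h0 N
  have b1 : h * ‖T‖ ≤ 4 * C1 := by
    have : ‖T‖ ≤ ∑ k ∈ Finset.Icc (-(N : ℤ)) N, C1 / (1 + |h * (k : ℝ)|) ^ 2 := by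
      refine (norm_sum_le _ _).trans (Finset.sum_le_sum fun k _ => ?_)
      rw [norm_mul, hen, mul_one]; exact hgn k
    calc h * ‖T‖ ≤ h * ∑ k ∈ Finset.Icc (-(N : ℤ)) N, C1 / (1 + |h * (k : ℝ)|) ^ 2 := by gcongr
      _ = C1 * ∑ k ∈ Finset.Icc (-(N : ℤ)) N, h / (1 + |h * (k : ℝ)|) ^ 2 := by
        rw [Finset.mul_sum, Finset.mul_sum]
        refine Finset.sum_congr rfl fun k _ => ?_
        ring
      _ ≤ C1 * (h + 2) := by gcongr
      _ ≤ 4 * C1 := by nlinarith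
  have hbd : ∀ m : ℤ, (N : ℝ) ≤ |(m : ℝ)| → ‖g m‖ ≤ C1 * h := by
    intro m hm
    refine (hgn m).trans ?_
    rw [div_le_iff₀ (by positivity), abs_mul, abs_of_pos h0]
    have hN' : (1 : ℝ) ≤ N := by exact_mod_cast hN
    have q : h * N ≤ (1 + h * |(m : ℝ)|) ^ 2 := by
      have : h * N ≤ h * |(m : ℝ)| := by gcongr
      nlinarith [mul_nonneg h0.le (abs_nonneg (m : ℝ))]
    have : 1 ≤ h * (1 + h * |(m : ℝ)|) ^ 2 := by
      calc 1 ≤ h ^ 2 * N := hhN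
        _ = h * (h * N) := by ring
        _ ≤ _ := by gcongr
    nlinarith
  have hmul : (((2 - 2 * Real.cos x : ℝ)) : ℂ) * T
      = ∑ k ∈ Finset.Icc (-(N : ℤ)) N, g k * (2 * e k - e (k + 1) - e (k - 1)) := by
    rw [hT, Finset.mul_sum]
    refine Finset.sum_congr rfl fun k _ => ?_
    have e1 : e (k + 1) = e k * Complex.exp (x * Complex.I) := by
      rw [he]; simp only; rw [← Complex.exp_add]; congr 1; push_cast; ring
    have e2 : e (k - 1) = e k * Complex.exp (-x * Complex.I) := by
      rw [he]; simp only; rw [← Complex.exp_add]; congr 1; push_cast; ring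
    rw [e1, e2]
    push_cast
    rw [Complex.cos]
    ring
  have b2 : h * ((2 - 2 * Real.cos x) * ‖T‖) ≤ (4 * C1 + 4 * C2) * h ^ 2 := by
    have hnn : 0 ≤ 2 - 2 * Real.cos x := by linarith [Real.cos_le_one x]
    have : (2 - 2 * Real.cos x) * ‖T‖ = ‖(((2 - 2 * Real.cos x : ℝ)) : ℂ) * T‖ := by
      rw [norm_mul, Complex.norm_real, Real.norm_of_nonneg hnn]
    rw [this, hmul, abel_two]
    have s1 : ‖∑ k ∈ Finset.Icc (-(N : ℤ)) N, (2 * g k - g (k + 1) - g (k - 1)) * e k‖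
        ≤ ∑ k ∈ Finset.Icc (-(N : ℤ)) N, C2 * h ^ 2 / (1 + |h * (k : ℝ)|) ^ 2 := by
      refine (norm_sum_le _ _).trans (Finset.sum_le_sum fun k _ => ?_)
      rw [norm_mul, hen, mul_one, le_div_iff₀ (by positivity)]
      have : ‖2 * g k - g (k + 1) - g (k - 1)‖
          = |Gf a (h * k + h) + Gf a (h * k - h) - 2 * Gf a (h * k)| := by
        rw [← Real.norm_eq_abs, ← Complex.norm_real, ← norm_neg]
        congr 1
        rw [hg]
        push_cast
        rw [show h * ((k : ℝ) + 1) = h * k + h by ring, show h * ((k : ℝ) - 1) = h * k - h by ring]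
        ring
      rw [this]
      exact H2 _ _ h0.le h2
    have s2 : ‖g (N + 1) * e N + g (-N - 1) * e (-N) - g N * e (N + 1) - g (-N) * e (-N - 1)‖
        ≤ 4 * (C1 * h) := by
      have n1 := hbd (N + 1) (by push_cast; rw [abs_of_nonneg (by positivity)]; linarith)
      have n2 := hbd (-N - 1) (by
        push_cast; rw [show (-(N : ℝ) - 1) = -(N + 1) by ring, abs_neg,
          abs_of_nonneg (by positivity)]; linarith)
      have n3 := hbd N (by push_cast; rw [abs_of_nonneg (by positivity)])
      have n4 := hbd (-N) (by push_cast; rw [abs_neg, abs_of_nonneg (by positivity)])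
      refine (norm_sub_le _ _).trans ?_
      have := (norm_sub_le (g (N + 1) * e N + g (-N - 1) * e (-N)) (g N * e (N + 1)))
      have := (norm_add_le (g (N + 1) * e N) (g (-N - 1) * e (-N)))
      simp only [norm_mul, hen, mul_one] at *
      linarith
    have s3 : h * ∑ k ∈ Finset.Icc (-(N : ℤ)) N, C2 * h ^ 2 / (1 + |h * (k : ℝ)|) ^ 2
        ≤ C2 * h ^ 2 * 4 := by
      calc _ = C2 * h ^ 2 * ∑ k ∈ Finset.Icc (-(N : ℤ)) N, h / (1 + |h * (k : ℝ)|) ^ 2 := by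
            rw [Finset.mul_sum, Finset.mul_sum]
            refine Finset.sum_congr rfl fun k _ => ?_
            ring
        _ ≤ C2 * h ^ 2 * 4 := by gcongr; linarith
    have := (norm_add_le _ _).trans (add_le_add s1 s2)
    have := mul_le_mul_of_nonneg_left this h0.le
    refine this.trans ?_
    rw [mul_add]
    nlinarith
  calc h ^ (a + 1) * (h ^ 2 + (2 - 2 * Real.cos x)) * ‖theta a N (h ^ 2) x‖
      = h ^ 2 * (h * ‖T‖) + h * ((2 - 2 * Real.cos x) * ‖T‖) := by rw [hTn]; ring
    _ ≤ h ^ 2 * (4 * C1) + (4 * C1 + 4 * C2) * h ^ 2 := by gcongr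
    _ = _ := by ring

lemma sum_abs_gauss (a : ℕ) : ∃ C : ℝ, 0 ≤ C ∧ ∀ N : ℕ,
    ∑ k ∈ Finset.Icc (-(N : ℤ)) N, |(k : ℝ)| ^ a * Real.exp (-(k : ℝ) ^ 2) ≤ C := by
  obtain ⟨C1, hC1, H1⟩ := Gf_bound a
  refine ⟨3 * C1, by positivity, fun N => ?_⟩
  have hW := sum_weight 1 one_pos N
  calc _ ≤ ∑ k ∈ Finset.Icc (-(N : ℤ)) N, C1 * (1 / (1 + |1 * (k : ℝ)|) ^ 2) := by
        refine Finset.sum_le_sum fun k _ => ?_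
        rw [mul_one_div, le_div_iff₀ (by positivity), one_mul]
        have := H1 k
        rwa [Gf, abs_mul, abs_pow, abs_of_pos (Real.exp_pos _)] at this
    _ ≤ C1 * (1 + 2) := by rw [← Finset.mul_sum]; gcongr
    _ = 3 * C1 := by ring


/-! ### The two-dimensional kernel -/

/-- Exponential monomial. -/
def ee (k : Fin 2 → ℤ) (x : Fin 2 → ℝ) : ℂ :=
  Complex.exp (Complex.I * (k 0 * x 0 + k 1 * x 1))

/-- `|k|^2`. -/
def nsq (k : Fin 2 → ℤ) : ℝ := (k 0 : ℝ) ^ 2 + (k 1 : ℝ) ^ 2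

/-- Frequency box. -/
def box (N : ℕ) : Finset (Fin 2 → ℤ) := Fintype.piFinset fun _ => Finset.Icc (-(N : ℤ)) N

/-- Smoothed truncated third derivative of the biharmonic Green function. -/
def Ker (a : Fin 2 → ℕ) (N : ℕ) (x : Fin 2 → ℝ) : ℂ :=
  ∑ k ∈ box N, (((k 0 : ℝ) ^ a 0 * (k 1 : ℝ) ^ a 1 * Real.exp (-nsq k / N) / nsq k ^ 2 : ℝ) : ℂ)
    * ee k x

/-- Periodic distance to the origin. -/
def rr (x : Fin 2 → ℝ) : ℝ := Real.sqrt ((2 - 2 * Real.cos (x 0)) + (2 - 2 * Real.cos (x 1)))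

lemma nsq_nonneg (k : Fin 2 → ℤ) : 0 ≤ nsq k := by unfold nsq; positivity

lemma nsq_cast (k : Fin 2 → ℤ) : nsq k = (((k 0) ^ 2 + (k 1) ^ 2 : ℤ) : ℝ) := by
  unfold nsq; push_cast; rfl

lemma eq_zero_of_nsq {k : Fin 2 → ℤ} (h : nsq k = 0) : k 0 = 0 ∧ k 1 = 0 := by
  rw [nsq_cast] at h
  have h' : (k 0) ^ 2 + (k 1) ^ 2 = 0 := by exact_mod_cast h
  constructor <;> nlinarith [sq_nonneg (k 0), sq_nonneg (k 1)]

lemma one_le_nsq {k : Fin 2 → ℤ} (h : nsq k ≠ 0) : 1 ≤ nsq k := by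
  have h0 := nsq_nonneg k
  have : 0 < nsq k := lt_of_le_of_ne h0 (Ne.symm h)
  rw [nsq_cast] at *
  exact_mod_cast this

lemma norm_ee (k : Fin 2 → ℤ) (x : Fin 2 → ℝ) : ‖ee k x‖ = 1 := by
  have : Complex.I * (k 0 * x 0 + k 1 * x 1) = ((k 0 * x 0 + k 1 * x 1 : ℝ) : ℂ) * Complex.I := by
    push_cast; ring
  rw [ee, this, Complex.norm_exp_ofReal_mul_I]

lemma integral_t_exp (n : ℝ) (hn : n ≠ 0) :
    ∫ t in (0 : ℝ)..1, t * Real.exp (-t * n)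
      = 1 / n ^ 2 - Real.exp (-n) * (1 / n + 1 / n ^ 2) := by
  have : ∀ t ∈ Set.uIcc (0 : ℝ) 1, HasDerivAt
      (fun t : ℝ => -Real.exp (-t * n) * (t / n + 1 / n ^ 2)) (t * Real.exp (-t * n)) t := by
    intro t _
    have h1 : HasDerivAt (fun t : ℝ => -t * n) (-n) t := by
      simpa using ((hasDerivAt_id t).fun_neg.mul_const n)
    have h2 : HasDerivAt (fun t : ℝ => t / n + 1 / n ^ 2) (1 / n) t :=
      ((hasDerivAt_id t).div_const n).add_const _
    refine (h1.exp.fun_neg.mul h2).congr_deriv ?_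
    field_simp
    ring
  rw [intervalIntegral.integral_eq_sub_of_hasDerivAt this]
  · simp; ring
  · apply Continuous.intervalIntegrable; fun_prop

lemma box_prod (N : ℕ) (f g : ℤ → ℂ) :
    (∑ k ∈ Finset.Icc (-(N : ℤ)) N, f k) * (∑ k ∈ Finset.Icc (-(N : ℤ)) N, g k)
      = ∑ k ∈ box N, f (k 0) * g (k 1) := by
  have := Finset.prod_univ_sum (fun _ : Fin 2 => Finset.Icc (-(N : ℤ)) N)
    (fun i k => (![f, g] i) k)
  simpa [Fin.prod_univ_two, box] using this

lemma box_prod_real (N : ℕ) (f g : ℤ → ℝ) :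
    (∑ k ∈ Finset.Icc (-(N : ℤ)) N, f k) * (∑ k ∈ Finset.Icc (-(N : ℤ)) N, g k)
      = ∑ k ∈ box N, f (k 0) * g (k 1) := by
  have := Finset.prod_univ_sum (fun _ : Fin 2 => Finset.Icc (-(N : ℤ)) N)
    (fun i k => (![f, g] i) k)
  simpa [Fin.prod_univ_two, box] using this

lemma theta_prod (a : Fin 2 → ℕ) (N : ℕ) (τ : ℝ) (x : Fin 2 → ℝ) :
    theta (a 0) N τ (x 0) * theta (a 1) N τ (x 1)
      = ∑ k ∈ box N, (((k 0 : ℝ) ^ a 0 * (k 1 : ℝ) ^ a 1 * Real.exp (-τ * nsq k) : ℝ) : ℂ)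
        * ee k x := by
  rw [theta, theta, box_prod]
  refine Finset.sum_congr rfl fun k _ => ?_
  have h1 : Real.exp (-τ * nsq k) = Real.exp (-τ * (k 0 : ℝ) ^ 2) * Real.exp (-τ * (k 1 : ℝ) ^ 2) := by
    rw [← Real.exp_add, nsq]; ring_nf
  have h2 : ee k x = Complex.exp (Complex.I * (k 0 * x 0)) * Complex.exp (Complex.I * (k 1 * x 1)) := by
    rw [← Complex.exp_add, ee]; ring_nf
  rw [h1, h2]; push_cast; ring

lemma theta_continuous (a N : ℕ) (x : ℝ) : Continuous fun τ => theta a N τ x := by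
  unfold theta
  refine continuous_finsetSum _ fun k _ => ?_
  refine Continuous.mul ?_ continuous_const
  exact Complex.continuous_ofReal.comp (by fun_prop)

lemma Ker_split (a : Fin 2 → ℕ) (ha : a 0 + a 1 = 3) (N : ℕ) (x : Fin 2 → ℝ) :
    Ker a N x = (∫ t in (0 : ℝ)..1, (t : ℂ) *
        (theta (a 0) N (t + 1 / N) (x 0) * theta (a 1) N (t + 1 / N) (x 1)))
      + ∑ k ∈ box N, (((k 0 : ℝ) ^ a 0 * (k 1 : ℝ) ^ a 1 * Real.exp (-nsq k / N)
        * (Real.exp (-nsq k) * (1 / nsq k + 1 / nsq k ^ 2)) : ℝ) : ℂ) * ee k x := by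
  have h1 : ∀ t : ℝ, (t : ℂ) *
        (theta (a 0) N (t + 1 / N) (x 0) * theta (a 1) N (t + 1 / N) (x 1))
      = ∑ k ∈ box N, ((t * Real.exp (-t * nsq k) : ℝ) : ℂ) *
        ((((k 0 : ℝ) ^ a 0 * (k 1 : ℝ) ^ a 1 * Real.exp (-nsq k / N) : ℝ) : ℂ) * ee k x) := by
    intro t
    rw [theta_prod, Finset.mul_sum]
    refine Finset.sum_congr rfl fun k _ => ?_
    have : Real.exp (-(t + 1 / N) * nsq k) = Real.exp (-t * nsq k) * Real.exp (-nsq k / N) := by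
      rw [← Real.exp_add]; ring_nf
    rw [this]; push_cast; ring
  simp_rw [h1]
  rw [intervalIntegral.integral_finsetSum, ← Finset.sum_add_distrib, Ker]
  · refine Finset.sum_congr rfl fun k _ => ?_
    rw [intervalIntegral.integral_mul_const, intervalIntegral.integral_ofReal]
    by_cases hk : nsq k = 0
    · obtain ⟨k0, k1⟩ := eq_zero_of_nsq hk
      have hp : (k 0 : ℝ) ^ a 0 * (k 1 : ℝ) ^ a 1 = 0 := by
        rw [k0, k1, Int.cast_zero, ← pow_add, ha]; norm_num
      rw [hp]; simp
    · rw [integral_t_exp _ hk, ← mul_assoc, ← Complex.ofReal_mul, ← add_mul, ← Complex.ofReal_add]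
      congr 2
      ring
  · intro k _
    apply Continuous.intervalIntegrable
    refine Continuous.mul ?_ continuous_const
    exact Complex.continuous_ofReal.comp (by fun_prop)

lemma integral_gker (C σ r : ℝ) (hC : 0 ≤ C) (hσ : 0 < σ) (hr : 0 < r) :
    IntervalIntegrable (fun t => 2 * C / (√(t + σ) * (√(t + σ) + r) ^ 2)) volume 0 1 ∧
    ∫ t in (0 : ℝ)..1, 2 * C / (√(t + σ) * (√(t + σ) + r) ^ 2) ≤ 4 * C / r := by
  have hcont : ContinuousOn (fun t => 2 * C / (√(t + σ) * (√(t + σ) + r) ^ 2)) (Set.uIcc (0 : ℝ) 1) := by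
    intro t ht
    rw [Set.uIcc_of_le zero_le_one] at ht
    have hs : 0 < √(t + σ) := Real.sqrt_pos.2 (by linarith [ht.1])
    apply ContinuousAt.continuousWithinAt
    refine ContinuousAt.div (by fun_prop) (by fun_prop) (by positivity)
  refine ⟨hcont.intervalIntegrable, ?_⟩
  have : ∀ t ∈ Set.uIcc (0 : ℝ) 1, HasDerivAt
      (fun t : ℝ => -(4 * C) * (√(t + σ) + r)⁻¹) (2 * C / (√(t + σ) * (√(t + σ) + r) ^ 2)) t := by
    intro t ht
    rw [Set.uIcc_of_le zero_le_one] at ht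
    have hs : 0 < √(t + σ) := Real.sqrt_pos.2 (by linarith [ht.1])
    have h1 : HasDerivAt (fun t : ℝ => t + σ) 1 t := (hasDerivAt_id t).add_const σ
    have h2 := (h1.sqrt (by linarith [ht.1])).add_const r
    refine ((h2.fun_inv (by positivity)).const_mul (-(4 * C))).congr_deriv ?_
    field_simp
    ring
  rw [intervalIntegral.integral_eq_sub_of_hasDerivAt this hcont.intervalIntegrable]
  have e1 : 0 ≤ 4 * C * (√(1 + σ) + r)⁻¹ := by positivity
  have e2 : 4 * C * (√(0 + σ) + r)⁻¹ ≤ 4 * C / r := by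
    rw [div_eq_mul_inv]
    gcongr
    linarith [Real.sqrt_nonneg (0 + σ)]
  linarith

lemma Ker_bound (a : Fin 2 → ℕ) (ha : a 0 + a 1 = 3) : ∃ C : ℝ, 0 ≤ C ∧ ∀ N : ℕ, 1 ≤ N →
    ∀ x, rr x * ‖Ker a N x‖ ≤ C := by
  obtain ⟨C0, hC0, H0⟩ := theta_bound (a 0)
  obtain ⟨C1, hC1, H1⟩ := theta_bound (a 1)
  obtain ⟨D0, hD0, S0⟩ := sum_abs_gauss (a 0)
  obtain ⟨D1, hD1, S1⟩ := sum_abs_gauss (a 1)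
  refine ⟨4 * (C0 * C1) + 3 * (2 * (D0 * D1)), by positivity, fun N hN x => ?_⟩
  have hc0 : 0 ≤ 2 - 2 * Real.cos (x 0) := by linarith [Real.cos_le_one (x 0)]
  have hc1 : 0 ≤ 2 - 2 * Real.cos (x 1) := by linarith [Real.cos_le_one (x 1)]
  have hr2 : rr x ^ 2 = (2 - 2 * Real.cos (x 0)) + (2 - 2 * Real.cos (x 1)) := by
    rw [rr, Real.sq_sqrt (by positivity)]
  have hrnn : 0 ≤ rr x := Real.sqrt_nonneg _
  have hr3 : rr x ≤ 3 := by
    have := Real.neg_one_le_cos (x 0)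
    have := Real.neg_one_le_cos (x 1)
    nlinarith
  rcases hrnn.eq_or_lt with hr | hr
  · rw [← hr, zero_mul]; positivity
  have hN' : (1 : ℝ) ≤ N := by exact_mod_cast hN
  have hσ : (0 : ℝ) < 1 / N := by positivity
  have hσ1 : (1 : ℝ) / N ≤ 1 := by rw [div_le_one (by positivity)]; exact hN'
  obtain ⟨hInt, hle⟩ := integral_gker (C0 * C1) (1 / N) (rr x) (by positivity) hσ hr
  have main : ‖∫ t in (0 : ℝ)..1, (t : ℂ) *
        (theta (a 0) N (t + 1 / N) (x 0) * theta (a 1) N (t + 1 / N) (x 1))‖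
      ≤ 4 * (C0 * C1) / rr x := by
    refine (intervalIntegral.norm_integral_le_of_norm_le zero_le_one ?_ hInt).trans hle
    refine Filter.Eventually.of_forall fun t ht => ?_
    set h := √(t + 1 / N) with hh
    have hpos : 0 < t + 1 / N := by linarith [ht.1]
    have hh0 : 0 < h := Real.sqrt_pos.2 hpos
    have hsq : h ^ 2 = t + 1 / N := Real.sq_sqrt hpos.le
    have hh2 : h ≤ 2 := by nlinarith [ht.2]
    have hhN : 1 ≤ h ^ 2 * N := by
      rw [hsq, add_mul, one_div, inv_mul_cancel₀ (by positivity)]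
      nlinarith [ht.1]
    have b0 := H0 N hN h hh0 hh2 hhN (x 0)
    have b1 := H1 N hN h hh0 hh2 hhN (x 1)
    rw [← hsq, norm_mul, norm_mul, Complex.norm_real, Real.norm_of_nonneg ht.1.le]
    set X := ‖theta (a 0) N (h ^ 2) (x 0)‖ with hX
    set Y := ‖theta (a 1) N (h ^ 2) (x 1)‖ with hY
    have hXn : 0 ≤ X := norm_nonneg _
    have hYn : 0 ≤ Y := norm_nonneg _
    have pr := mul_le_mul b0 b1 (by positivity) (by positivity)
    have hpow : h ^ (a 0 + 1) * h ^ (a 1 + 1) = h ^ 5 := by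
      rw [← pow_add]; congr 1; omega
    have q1 : h ^ 4 * (h ^ 3 * (h ^ 2 + rr x ^ 2) * (X * Y)) ≤ h ^ 4 * (C0 * C1) := by
      calc h ^ 4 * (h ^ 3 * (h ^ 2 + rr x ^ 2) * (X * Y))
          = h ^ 5 * (h ^ 2 * (h ^ 2 + rr x ^ 2)) * (X * Y) := by ring
        _ ≤ h ^ 5 * ((h ^ 2 + (2 - 2 * Real.cos (x 0))) * (h ^ 2 + (2 - 2 * Real.cos (x 1))))
            * (X * Y) := by
          have hmono : h ^ 2 * (h ^ 2 + rr x ^ 2)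
              ≤ (h ^ 2 + (2 - 2 * Real.cos (x 0))) * (h ^ 2 + (2 - 2 * Real.cos (x 1))) := by
            rw [hr2]; nlinarith [mul_nonneg hc0 hc1]
          exact mul_le_mul_of_nonneg_right
            (mul_le_mul_of_nonneg_left hmono (by positivity)) (by positivity)
        _ = h ^ (a 0 + 1) * (h ^ 2 + (2 - 2 * Real.cos (x 0))) * X *
            (h ^ (a 1 + 1) * (h ^ 2 + (2 - 2 * Real.cos (x 1))) * Y) := by
          rw [← hpow]; ring
        _ ≤ _ := pr
        _ = _ := by ring
    have q2 : h ^ 3 * (h ^ 2 + rr x ^ 2) * (X * Y) ≤ C0 * C1 :=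
      le_of_mul_le_mul_left q1 (by positivity)
    rw [le_div_iff₀ (by positivity)]
    have hth : t ≤ h ^ 2 := by rw [hsq]; linarith
    calc t * (X * Y) * (h * (h + rr x) ^ 2)
        ≤ h ^ 2 * (X * Y) * (h * (2 * (h ^ 2 + rr x ^ 2))) := by
          gcongr
          nlinarith [sq_nonneg (h - rr x)]
      _ = 2 * (h ^ 3 * (h ^ 2 + rr x ^ 2) * (X * Y)) := by ring
      _ ≤ 2 * (C0 * C1) := by linarith
  have rem : ‖∑ k ∈ box N, (((k 0 : ℝ) ^ a 0 * (k 1 : ℝ) ^ a 1 * Real.exp (-nsq k / N)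
        * (Real.exp (-nsq k) * (1 / nsq k + 1 / nsq k ^ 2)) : ℝ) : ℂ) * ee k x‖
      ≤ 2 * (D0 * D1) := by
    have hp := box_prod_real N (fun k => |(k : ℝ)| ^ a 0 * Real.exp (-(k : ℝ) ^ 2))
      (fun k => |(k : ℝ)| ^ a 1 * Real.exp (-(k : ℝ) ^ 2))
    have hp2 : ∑ k ∈ box N, (|(k 0 : ℝ)| ^ a 0 * Real.exp (-(k 0 : ℝ) ^ 2)) *
        (|(k 1 : ℝ)| ^ a 1 * Real.exp (-(k 1 : ℝ) ^ 2)) ≤ D0 * D1 := by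
      rw [← hp]
      exact mul_le_mul (S0 N) (S1 N) (Finset.sum_nonneg fun _ _ => by positivity) hD0
    refine (norm_sum_le _ _).trans ?_
    refine le_trans ?_ (mul_le_mul_of_nonneg_left hp2 (by norm_num : (0 : ℝ) ≤ 2))
    rw [Finset.mul_sum]
    refine Finset.sum_le_sum fun k _ => ?_
    rw [norm_mul, norm_ee, mul_one, Complex.norm_real, Real.norm_eq_abs, abs_mul, abs_mul, abs_mul,
      abs_pow, abs_pow, abs_of_pos (Real.exp_pos _)]
    have e1 : Real.exp (-nsq k / N) ≤ 1 := by
      rw [Real.exp_le_one_iff]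
      exact div_nonpos_of_nonpos_of_nonneg (by linarith [nsq_nonneg k]) (by positivity)
    have e2 : |Real.exp (-nsq k) * (1 / nsq k + 1 / nsq k ^ 2)| ≤ 2 * Real.exp (-nsq k) := by
      have := nsq_nonneg k
      rw [abs_of_nonneg (by positivity), mul_comm]
      gcongr
      by_cases hk : nsq k = 0
      · rw [hk]; norm_num
      · have h1 := one_le_nsq hk
        have h2 : 1 / nsq k ≤ 1 := by rw [div_le_one (by positivity)]; exact h1
        have h3 : 1 / nsq k ^ 2 ≤ 1 := by
          rw [div_le_one (by positivity)]; nlinarith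
        linarith
    have e3 : Real.exp (-nsq k) = Real.exp (-(k 0 : ℝ) ^ 2) * Real.exp (-(k 1 : ℝ) ^ 2) := by
      rw [← Real.exp_add, nsq]; ring_nf
    calc _ ≤ |(k 0 : ℝ)| ^ a 0 * |(k 1 : ℝ)| ^ a 1 * 1 * (2 * Real.exp (-nsq k)) := by gcongr
      _ = _ := by rw [e3]; ring
  rw [Ker_split a ha N x]
  have := (norm_add_le _ _).trans (add_le_add main rem)
  calc _ ≤ rr x * (4 * (C0 * C1) / rr x + 2 * (D0 * D1)) := by gcongr
    _ = 4 * (C0 * C1) + rr x * (2 * (D0 * D1)) := by field_simp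
    _ ≤ _ := by gcongr


/-! ### Integrals of the kernel over sets -/

/-- One-dimensional singular profile. -/
def gsing (b : ℝ) (z : ℝ) : ℝ≥0∞ :=
  Set.indicator (Set.Icc 0 b) (fun z => (ENNReal.ofReal (√z))⁻¹) z

lemma measurable_gsing (b : ℝ) : Measurable (gsing b) := by
  unfold gsing
  refine Measurable.indicator ?_ measurableSet_Icc
  fun_prop

lemma lintegral_gsing (b : ℝ) (hb : 0 ≤ b) : ∫⁻ z, gsing b z = ENNReal.ofReal (2 * √b) := by
  unfold gsing
  rw [lintegral_indicator measurableSet_Icc, ← setLIntegral_congr (Ioc_ae_eq_Icc (μ := volume))]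
  have h1 : ∫⁻ z in Set.Ioc 0 b, (ENNReal.ofReal (√z))⁻¹
      = ∫⁻ z in Set.Ioc 0 b, ENNReal.ofReal (z ^ (-(1 / 2) : ℝ)) := by
    refine setLIntegral_congr_fun measurableSet_Ioc fun z hz => ?_
    have hz' : 0 < √z := Real.sqrt_pos.2 hz.1
    rw [← ENNReal.ofReal_inv_of_pos hz', Real.rpow_neg hz.1.le, Real.sqrt_eq_rpow]
  rw [h1]
  have hi : IntervalIntegrable (fun z : ℝ => z ^ (-(1 / 2) : ℝ)) volume 0 b :=
    intervalIntegral.intervalIntegrable_rpow' (by norm_num)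
  rw [← ofReal_integral_eq_lintegral_ofReal
    ((intervalIntegrable_iff_integrableOn_Ioc_of_le hb).1 hi)]
  · congr 1
    rw [← intervalIntegral.integral_of_le hb, integral_rpow (Or.inl (by norm_num))]
    rw [Real.zero_rpow (by norm_num), Real.sqrt_eq_rpow]
    norm_num
    ring
  · refine (ae_restrict_iff' measurableSet_Ioc).2 (Filter.Eventually.of_forall fun z hz => ?_)
    exact Real.rpow_nonneg hz.1.le _

/-- Sum of translates and reflections of `gsing`. -/
def fsing (b : ℝ) (z : ℝ) : ℝ≥0∞ :=
  ∑ m ∈ ({-1, 0, 1} : Finset ℤ), (gsing b (z - 2 * π * m) + gsing b (-(z - 2 * π * m)))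

lemma measurable_fsing (b : ℝ) : Measurable (fsing b) := by
  unfold fsing
  have := measurable_gsing b
  fun_prop

lemma lintegral_fsing (b : ℝ) (hb : 0 ≤ b) : ∫⁻ z, fsing b z = 6 * ENNReal.ofReal (2 * √b) := by
  unfold fsing
  have hm := measurable_gsing b
  rw [lintegral_finsetSum _ (fun m _ => by fun_prop)]
  have : ∀ m : ℤ, ∫⁻ z, (gsing b (z - 2 * π * m) + gsing b (-(z - 2 * π * m)))
      = 2 * ENNReal.ofReal (2 * √b) := by
    intro m
    rw [lintegral_sub_right_eq_self (fun z => gsing b z + gsing b (-z)) (2 * π * m),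
      lintegral_add_left hm, lintegral_neg_eq_self (gsing b), lintegral_gsing b hb]
    rw [← two_mul]
  simp_rw [this]
  rw [Finset.sum_const, Finset.card_insert_of_notMem (by simp), Finset.card_pair (by norm_num)]
  rw [nsmul_eq_mul, ← mul_assoc]
  norm_num

lemma gsing_add_le (b w : ℝ) (hw : |w| ≤ b) :
    (ENNReal.ofReal (√|w|))⁻¹ ≤ gsing b w + gsing b (-w) := by
  unfold gsing
  rcases le_total 0 w with h | h
  · rw [abs_of_nonneg h] at *
    rw [Set.indicator_of_mem (a := w) (show w ∈ Set.Icc 0 b from ⟨h, hw⟩)]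
    exact le_self_add
  · rw [abs_of_nonpos h] at *
    rw [Set.indicator_of_mem (a := -w) (show -w ∈ Set.Icc 0 b from ⟨by linarith, hw⟩)]
    exact le_add_self

lemma cos_lower (w : ℝ) (hw : |w| ≤ π) : w ^ 2 ≤ 4 * (2 - 2 * Real.cos w) := by
  have h1 := Real.mul_abs_le_abs_sin (x := w / 2) (by rw [abs_div, abs_two]; linarith)
  have h2 : 2 - 2 * Real.cos w = 4 * Real.sin (w / 2) ^ 2 := by
    have h3 := Real.cos_two_mul (w / 2)
    rw [mul_div_cancel₀ _ (two_ne_zero)] at h3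
    have := Real.sin_sq_add_cos_sq (w / 2)
    rw [h3]
    linarith
  rw [h2, ← sq_abs (Real.sin (w / 2)), ← sq_abs w]
  rw [abs_div, abs_two] at h1
  have hp : 1 / 4 ≤ 1 / π := one_div_le_one_div_of_le Real.pi_pos Real.pi_le_four
  have h4 : |w| / 4 ≤ |Real.sin (w / 2)| := by
    refine le_trans ?_ h1
    have : 2 / π * (|w| / 2) = 1 / π * |w| := by ring
    rw [this]
    nlinarith [abs_nonneg w]
  nlinarith [abs_nonneg w]

lemma cos_lower' (z : ℝ) (hz : |z| ≤ 2 * π) : ∃ m ∈ ({-1, 0, 1} : Finset ℤ),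
    (z - 2 * π * m) ^ 2 ≤ 4 * (2 - 2 * Real.cos z) := by
  have hc : ∀ m : ℤ, Real.cos z = Real.cos (z - 2 * π * m) := by
    intro m
    have := Real.cos_sub_int_mul_two_pi z m
    rw [← this]; congr 1; ring
  rw [abs_le] at hz
  have hpi := Real.pi_pos
  rcases le_total z (-π) with h | h
  · refine ⟨-1, by simp, ?_⟩
    rw [hc (-1)]; apply cos_lower
    push_cast; rw [abs_le]; constructor <;> linarith
  rcases le_total z π with h' | h'
  · refine ⟨0, by simp, ?_⟩
    rw [hc 0]; apply cos_lower
    push_cast; rw [abs_le]; constructor <;> linarith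
  · refine ⟨1, by simp, ?_⟩
    rw [hc 1]; apply cos_lower
    push_cast; rw [abs_le]; constructor <;> linarith

lemma fsing_ge (b z : ℝ) {m : ℤ} (hm : m ∈ ({-1, 0, 1} : Finset ℤ)) (hw : |z - 2 * π * m| ≤ b) :
    (ENNReal.ofReal (√|z - 2 * π * m|))⁻¹ ≤ fsing b z := by
  refine (gsing_add_le b _ hw).trans ?_
  unfold fsing
  exact Finset.single_le_sum (f := fun m : ℤ => gsing b (z - 2 * π * m) + gsing b (-(z - 2 * π * m)))
    (fun _ _ => zero_le) hm

lemma measurableSet_T2 : MeasurableSet T2 := by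
  unfold T2
  have : Set.Ico (0 : Fin 2 → ℝ) (fun _ => 2 * π)
      = Set.Icc 0 (fun _ => 2 * π) \ {fun _ => 2 * π} := by
    ext x
    simp only [Set.mem_Ico, Set.mem_sdiff, Set.mem_Icc, Set.mem_singleton_iff, lt_iff_le_and_ne]
    tauto
  rw [this]
  exact measurableSet_Icc.diff (measurableSet_singleton _)

lemma T2_sub {x y : Fin 2 → ℝ} (hx : x ∈ T2) (hy : y ∈ T2) (i : Fin 2) : |(x - y) i| ≤ 2 * π := by
  have h1 := hx.1 i
  have h2 : x i ≤ 2 * π := hx.2.le i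
  have h3 := hy.1 i
  have h4 : y i ≤ 2 * π := hy.2.le i
  simp only [Pi.zero_apply, Pi.sub_apply] at *
  rw [abs_le]; constructor <;> linarith

lemma kernel_pointwise (D R : ℝ) (hD : 0 < D) (hR : 0 < R) (z : Fin 2 → ℝ)
    (hz : ∀ i, |z i| ≤ 2 * π) (κ : ℝ) (hκ : 0 ≤ κ) (h : rr z * κ ≤ D) :
    ENNReal.ofReal κ ≤ ENNReal.ofReal (D / R)
      + ENNReal.ofReal (2 * D) * (fsing (2 * R) (z 0) * fsing (2 * R) (z 1)) := by
  rcases le_or_gt R (rr z) with hr | hr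
  · refine le_trans (ENNReal.ofReal_le_ofReal ?_) le_self_add
    rw [le_div_iff₀ hR]
    nlinarith
  refine le_trans ?_ le_add_self
  have hc0 : 0 ≤ 2 - 2 * Real.cos (z 0) := by linarith [Real.cos_le_one (z 0)]
  have hc1 : 0 ≤ 2 - 2 * Real.cos (z 1) := by linarith [Real.cos_le_one (z 1)]
  have hr2 : rr z ^ 2 = (2 - 2 * Real.cos (z 0)) + (2 - 2 * Real.cos (z 1)) := by
    rw [rr, Real.sq_sqrt (by positivity)]
  have hrnn : 0 ≤ rr z := Real.sqrt_nonneg _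
  have hrR : rr z ^ 2 ≤ R ^ 2 := by nlinarith
  obtain ⟨m0, hm0, q0⟩ := cos_lower' (z 0) (hz 0)
  obtain ⟨m1, hm1, q1⟩ := cos_lower' (z 1) (hz 1)
  have f0 := fsing_ge (2 * R) (z 0) hm0 (abs_le_of_sq_le_sq (by nlinarith) (by linarith))
  have f1 := fsing_ge (2 * R) (z 1) hm1 (abs_le_of_sq_le_sq (by nlinarith) (by linarith))
  refine le_trans ?_ (mul_le_mul_right (mul_le_mul' f0 f1) _)
  set w0 := z 0 - 2 * π * m0 with hw0
  set w1 := z 1 - 2 * π * m1 with hw1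
  by_cases hz0 : √|w0| = 0
  · rw [hz0]
    simp only [ENNReal.ofReal_zero, ENNReal.inv_zero]
    rw [ENNReal.top_mul (by simp), ENNReal.mul_top (by simpa using hD)]
    exact le_top
  by_cases hz1 : √|w1| = 0
  · rw [hz1]
    simp only [ENNReal.ofReal_zero, ENNReal.inv_zero]
    rw [ENNReal.mul_top (by simp), ENNReal.mul_top (by simpa using hD)]
    exact le_top
  have p0 : 0 < √|w0| := lt_of_le_of_ne (Real.sqrt_nonneg _) (Ne.symm hz0)
  have p1 : 0 < √|w1| := lt_of_le_of_ne (Real.sqrt_nonneg _) (Ne.symm hz1)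
  rw [← ENNReal.ofReal_inv_of_pos p0, ← ENNReal.ofReal_inv_of_pos p1,
    ← ENNReal.ofReal_mul (by positivity), ← ENNReal.ofReal_mul (by positivity)]
  apply ENNReal.ofReal_le_ofReal
  rw [← mul_inv, ← div_eq_mul_inv, le_div_iff₀ (by positivity)]
  have hle : √|w0| * √|w1| ≤ 2 * rr z := by
    apply abs_le_of_sq_le_sq' _ (by positivity) |>.2
    rw [mul_pow, Real.sq_sqrt (abs_nonneg _), Real.sq_sqrt (abs_nonneg _)]
    have : (2 * rr z) ^ 2 = 4 * (2 - 2 * Real.cos (z 0)) + 4 * (2 - 2 * Real.cos (z 1)) := by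
      rw [mul_pow, hr2]; ring
    rw [this]
    have a0 : |w0| ^ 2 ≤ 4 * (2 - 2 * Real.cos (z 0)) := by rw [sq_abs]; exact q0
    have a1 : |w1| ^ 2 ≤ 4 * (2 - 2 * Real.cos (z 1)) := by rw [sq_abs]; exact q1
    nlinarith [sq_nonneg (|w0| - |w1|), abs_nonneg w0, abs_nonneg w1]
  nlinarith

lemma lintegral_fsing2 (b : ℝ) (hb : 0 ≤ b) (x : Fin 2 → ℝ) :
    ∫⁻ y : Fin 2 → ℝ, fsing b ((x - y) 0) * fsing b ((x - y) 1) = ENNReal.ofReal (144 * b) := by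
  have hm := measurable_fsing b
  have h1 := (volume_preserving_finTwoArrow ℝ).lintegral_comp
    (f := fun p : ℝ × ℝ => fsing b (x 0 - p.1) * fsing b (x 1 - p.2)) (by fun_prop)
  have h2 : ∫⁻ y : Fin 2 → ℝ, fsing b ((x - y) 0) * fsing b ((x - y) 1)
      = ∫⁻ p : ℝ × ℝ, fsing b (x 0 - p.1) * fsing b (x 1 - p.2) := by
    rw [← h1]; rfl
  rw [h2]
  have h3 := lintegral_prod_mul (μ := (volume : Measure ℝ)) (ν := (volume : Measure ℝ))
    (f := fun y => fsing b (x 0 - y)) (g := fun y => fsing b (x 1 - y))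
    (by fun_prop) (by fun_prop)
  rw [Measure.volume_eq_prod, h3, lintegral_sub_left_eq_self (fsing b),
    lintegral_sub_left_eq_self (fsing b), lintegral_fsing b hb]
  rw [show (6 : ℝ≥0∞) = ENNReal.ofReal 6 by norm_num, ← ENNReal.ofReal_mul (by norm_num),
    ← ENNReal.ofReal_mul (by positivity)]
  congr 1
  have := Real.mul_self_sqrt hb
  nlinarith

lemma kernel_set_bound : ∃ C : ℝ, 0 < C ∧ ∀ D : ℝ, 0 < D → ∀ x ∈ T2, ∀ κ : (Fin 2 → ℝ) → ℝ,
    (∀ y, 0 ≤ κ y) → (∀ y, rr (x - y) * κ y ≤ D) → ∀ E ⊆ T2, MeasurableSet E →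
    ∫⁻ y in E, ENNReal.ofReal (κ y) ≤ ENNReal.ofReal (C * D) * volume E ^ (1 / 2 : ℝ) := by
  refine ⟨1000, by norm_num, fun D hD x hx κ hκ hb E hE hEm => ?_⟩
  have hT2 : volume T2 < ⊤ := by
    unfold T2
    exact (measure_mono Set.Ico_subset_Icc_self).trans_lt isCompact_Icc.measure_lt_top
  have hfin : volume E < ⊤ := (measure_mono hE).trans_lt hT2
  by_cases h0 : volume E = 0
  · rw [Measure.restrict_eq_zero.2 h0]; simp
  set v := (volume E).toReal with hv
  have hv0 : 0 < v := ENNReal.toReal_pos h0 hfin.ne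
  have hvE : volume E = ENNReal.ofReal v := (ENNReal.ofReal_toReal hfin.ne).symm
  set R := √v with hRdef
  have hR : 0 < R := Real.sqrt_pos.2 hv0
  have hRv : R ^ 2 = v := Real.sq_sqrt hv0.le
  have hRE : volume E ^ (1 / 2 : ℝ) = ENNReal.ofReal R := by
    rw [hvE, ENNReal.ofReal_rpow_of_pos hv0, hRdef, Real.sqrt_eq_rpow]
  calc ∫⁻ y in E, ENNReal.ofReal (κ y)
      ≤ ∫⁻ y in E, (ENNReal.ofReal (D / R) + ENNReal.ofReal (2 * D) *
          (fsing (2 * R) ((x - y) 0) * fsing (2 * R) ((x - y) 1))) := by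
        refine setLIntegral_mono' hEm fun y hy => ?_
        exact kernel_pointwise D R hD hR (x - y) (T2_sub hx (hE hy)) (κ y) (hκ y) (hb y)
    _ = ENNReal.ofReal (D / R) * volume E + ENNReal.ofReal (2 * D) * ∫⁻ y in E,
          (fsing (2 * R) ((x - y) 0) * fsing (2 * R) ((x - y) 1)) := by
        rw [lintegral_add_left measurable_const, setLIntegral_const, lintegral_const_mul]
        have hm := measurable_fsing (2 * R)
        fun_prop
    _ ≤ ENNReal.ofReal (D / R) * volume E + ENNReal.ofReal (2 * D) * ∫⁻ y : Fin 2 → ℝ,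
          (fsing (2 * R) ((x - y) 0) * fsing (2 * R) ((x - y) 1)) := by
        gcongr
        exact Measure.restrict_le_self
    _ = ENNReal.ofReal (D / R * v + 2 * D * (144 * (2 * R))) := by
        rw [lintegral_fsing2 _ (by positivity), hvE, ← ENNReal.ofReal_mul (by positivity),
          ← ENNReal.ofReal_mul (by positivity), ← ENNReal.ofReal_add (by positivity) (by positivity)]
    _ ≤ _ := by
        rw [hRE, ← ENNReal.ofReal_mul (by positivity)]
        apply ENNReal.ofReal_le_ofReal
        have : D / R * v = D * R := by rw [← hRv]; field_simp
        rw [this]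
        nlinarith [mul_pos hD hR]


/-! ### Layer-cake estimates -/

lemma volume_T2_lt_top : volume T2 < ⊤ := by
  unfold T2
  exact (measure_mono Set.Ico_subset_Icc_self).trans_lt isCompact_Icc.measure_lt_top

lemma measurable_enorm2 {u : (Fin 2 → ℝ) → (Fin 2 → ℝ)} (hu : Measurable u) :
    Measurable fun x => enorm2 (u x) := by
  unfold enorm2
  fun_prop

lemma layer_cake_le (κ h : (Fin 2 → ℝ) → ℝ) (hκ : Measurable κ) (hh : Measurable h)
    (hh0 : ∀ x, 0 ≤ h x) (K : ℝ≥0∞)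
    (hK : ∀ E ⊆ T2, MeasurableSet E →
      ∫⁻ y in E, ENNReal.ofReal (κ y) ≤ K * volume E ^ (1 / 2 : ℝ)) :
    ∫⁻ y in T2, ENNReal.ofReal (κ y) * ENNReal.ofReal (h y)
      ≤ K * ∫⁻ l in Set.Ioi (0 : ℝ), volume {x ∈ T2 | l < h x} ^ (1 / 2 : ℝ) := by
  set ν := (volume.restrict T2).withDensity (fun y => ENNReal.ofReal (κ y)) with hν
  have h1 : ∫⁻ y in T2, ENNReal.ofReal (κ y) * ENNReal.ofReal (h y)
      = ∫⁻ y, ENNReal.ofReal (h y) ∂ν := by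
    rw [hν, lintegral_withDensity_eq_lintegral_mul _ (by fun_prop) (by fun_prop)]
    rfl
  rw [h1, lintegral_eq_lintegral_meas_lt ν (Filter.Eventually.of_forall hh0) hh.aemeasurable]
  have hanti : Antitone fun l : ℝ => volume {x ∈ T2 | l < h x} ^ (1 / 2 : ℝ) := by
    intro a b hab
    refine ENNReal.rpow_le_rpow (measure_mono ?_) (by norm_num)
    rintro x ⟨hx, hx2⟩
    exact ⟨hx, lt_of_le_of_lt hab hx2⟩
  rw [← lintegral_const_mul _ hanti.measurable]
  refine lintegral_mono fun l => ?_
  have hm : MeasurableSet {x | l < h x} := measurableSet_lt measurable_const hh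
  rw [hν, withDensity_apply _ hm, Measure.restrict_restrict hm]
  have := hK ({x | l < h x} ∩ T2) Set.inter_subset_right (hm.inter measurableSet_T2)
  rwa [Set.inter_comm {x | l < h x} T2] at this ⊢

lemma set_bound_self (g : (Fin 2 → ℝ) → ℝ) (hg : Measurable g) (hg0 : ∀ x, 0 ≤ g x)
    (E : Set (Fin 2 → ℝ)) (hE : E ⊆ T2) (hEm : MeasurableSet E) :
    ∫⁻ y in E, ENNReal.ofReal (g y)
      ≤ (∫⁻ l in Set.Ioi (0 : ℝ), volume {x ∈ T2 | l < g x} ^ (1 / 2 : ℝ))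
        * volume E ^ (1 / 2 : ℝ) := by
  rw [lintegral_eq_lintegral_meas_lt _ (Filter.Eventually.of_forall hg0) hg.aemeasurable]
  have hanti : Antitone fun l : ℝ => volume {x ∈ T2 | l < g x} ^ (1 / 2 : ℝ) := by
    intro a b hab
    refine ENNReal.rpow_le_rpow (measure_mono ?_) (by norm_num)
    rintro x ⟨hx, hx2⟩
    exact ⟨hx, lt_of_le_of_lt hab hx2⟩
  rw [← lintegral_mul_const _ hanti.measurable]
  refine lintegral_mono fun l => ?_
  have hm : MeasurableSet {x | l < g x} := measurableSet_lt measurable_const hg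
  rw [Measure.restrict_apply hm]
  set a := volume ({x | l < g x} ∩ E)
  have ha : a = a ^ (1 / 2 : ℝ) * a ^ (1 / 2 : ℝ) := by
    rw [← ENNReal.rpow_add_of_nonneg _ _ (by norm_num) (by norm_num)]; norm_num
  rw [ha]
  refine mul_le_mul' ?_ ?_
  · refine ENNReal.rpow_le_rpow (measure_mono ?_) (by norm_num)
    rintro x ⟨hx, hx2⟩
    exact ⟨hE hx2, hx⟩
  · exact ENNReal.rpow_le_rpow (measure_mono Set.inter_subset_right) (by norm_num)

lemma L2_of_L21 (u : (Fin 2 → ℝ) → (Fin 2 → ℝ)) (hu : Measurable u) (h : L21 u < ⊤) :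
    ∫⁻ y in T2, ENNReal.ofReal (enorm2 (u y)) * ENNReal.ofReal (enorm2 (u y)) < ⊤ := by
  have hm := measurable_enorm2 hu
  have h0 : ∀ x, 0 ≤ enorm2 (u x) := fun x => Real.sqrt_nonneg _
  refine (layer_cake_le _ _ hm hm h0 (L21 u) (set_bound_self _ hm h0)).trans_lt ?_
  exact ENNReal.mul_lt_top h h

/-- The truncation of `|u|` to large values. -/
def utail (u : (Fin 2 → ℝ) → (Fin 2 → ℝ)) (M : ℕ) (x : Fin 2 → ℝ) : ℝ :=
  if (M : ℝ) < enorm2 (u x) then enorm2 (u x) else 0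

lemma utail_nonneg (u : (Fin 2 → ℝ) → (Fin 2 → ℝ)) (M : ℕ) (x : Fin 2 → ℝ) :
    0 ≤ utail u M x := by
  unfold utail
  split_ifs
  · exact Real.sqrt_nonneg _
  · exact le_rfl

lemma measurable_utail {u : (Fin 2 → ℝ) → (Fin 2 → ℝ)} (hu : Measurable u) (M : ℕ) :
    Measurable (utail u M) := by
  unfold utail
  exact Measurable.ite (measurableSet_lt measurable_const (measurable_enorm2 hu))
    (measurable_enorm2 hu) measurable_const

lemma enorm2_le_utail (u : (Fin 2 → ℝ) → (Fin 2 → ℝ)) (M : ℕ) (x : Fin 2 → ℝ) :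
    enorm2 (u x) ≤ utail u M x + M := by
  unfold utail
  have : (0 : ℝ) ≤ M := Nat.cast_nonneg M
  split_ifs with h <;> linarith

lemma utail_tendsto (u : (Fin 2 → ℝ) → (Fin 2 → ℝ)) (hu : Measurable u) (h : L21 u < ⊤) :
    Filter.Tendsto (fun M : ℕ =>
      ∫⁻ l in Set.Ioi (0 : ℝ), volume {x ∈ T2 | l < utail u M x} ^ (1 / 2 : ℝ))
      Filter.atTop (nhds 0) := by
  have hz : (0 : ℝ≥0∞) = ∫⁻ l in Set.Ioi (0 : ℝ), 0 := by simp
  rw [hz]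
  refine tendsto_lintegral_of_dominated_convergence
    (fun l : ℝ => volume {x ∈ T2 | l < enorm2 (u x)} ^ (1 / 2 : ℝ)) ?_ ?_ h.ne ?_
  · intro M
    have hanti : Antitone fun l : ℝ => volume {x ∈ T2 | l < utail u M x} ^ (1 / 2 : ℝ) := by
      intro a b hab
      refine ENNReal.rpow_le_rpow (measure_mono ?_) (by norm_num)
      rintro x ⟨hx, hx2⟩
      exact ⟨hx, lt_of_le_of_lt hab hx2⟩
    exact hanti.measurable
  · intro M
    refine Filter.Eventually.of_forall fun l => ?_
    refine ENNReal.rpow_le_rpow (measure_mono ?_) (by norm_num)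
    rintro x ⟨hx, hx2⟩
    refine ⟨hx, lt_of_lt_of_le hx2 ?_⟩
    unfold utail
    split_ifs
    · exact le_rfl
    · exact Real.sqrt_nonneg _
  · refine (ae_restrict_iff' measurableSet_Ioi).2 (Filter.Eventually.of_forall fun l hl => ?_)
    have hl' : (0 : ℝ) < l := hl
    have key : Filter.Tendsto (fun M : ℕ => volume {x ∈ T2 | l < utail u M x})
        Filter.atTop (nhds 0) := by
      have hI : (⋂ M : ℕ, {x ∈ T2 | l < utail u M x}) = ∅ := by
        ext x
        simp only [Set.mem_iInter, Set.mem_setOf_eq, Set.mem_empty_iff_false, iff_false, not_forall]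
        obtain ⟨M, hM⟩ := exists_nat_gt (enorm2 (u x))
        refine ⟨M, fun hx => ?_⟩
        have := hx.2
        unfold utail at this
        rw [if_neg (not_lt.2 hM.le)] at this
        linarith
      have := tendsto_measure_iInter_atTop (μ := volume)
        (s := fun M : ℕ => {x ∈ T2 | l < utail u M x}) ?_ ?_ ?_
      · rwa [hI, measure_empty] at this
      · intro M
        exact (measurableSet_T2.inter
          (measurableSet_lt measurable_const (measurable_utail hu M))).nullMeasurableSet
      · intro M M' hMM x hx
        refine ⟨hx.1, lt_of_lt_of_le hx.2 ?_⟩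
        have hc : (M : ℝ) ≤ M' := by exact_mod_cast hMM
        have hn : 0 ≤ enorm2 (u x) := Real.sqrt_nonneg _
        unfold utail
        split_ifs with h1 h2 h2 <;> linarith
      · exact ⟨0, ((measure_mono (Set.sep_subset _ _)).trans_lt volume_T2_lt_top).ne⟩
    have h2 := (ENNReal.continuous_rpow_const (y := (1 / 2 : ℝ))).tendsto 0 |>.comp key
    rwa [ENNReal.zero_rpow_of_pos (by norm_num)] at h2


/-! ### Fourier series on the torus -/

section torus

local instance instHaarUnit : MeasureSpace UnitAddCircle := ⟨AddCircle.haarAddCircle⟩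

local instance instHaarUnit2 : Measure.IsAddHaarMeasure (volume : Measure UnitAddCircle) :=
  inferInstanceAs (Measure.IsAddHaarMeasure AddCircle.haarAddCircle)

local instance instHaarUnit3 : IsProbabilityMeasure (volume : Measure UnitAddCircle) :=
  inferInstanceAs (IsProbabilityMeasure AddCircle.haarAddCircle)

/-- Representative in `(0,2π]²` of a point of the unit torus. -/
def tau (t : UnitAddTorus (Fin 2)) : Fin 2 → ℝ :=
  fun i => 2 * π * (AddCircle.equivIoc 1 0 (t i)).1

lemma measurable_tau : Measurable tau := by
  unfold tau
  refine measurable_pi_lambda _ fun i => ?_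
  have h := (AddCircle.measurableEquivIoc (1 : ℝ) 0).measurable
  have h2 : Measurable fun t : UnitAddTorus (Fin 2) => (AddCircle.measurableEquivIoc (1 : ℝ) 0 (t i)).1 :=
    (measurable_subtype_coe.comp h).comp (measurable_pi_apply i)
  exact h2.const_mul _

lemma T2_ae_eq : ({y : Fin 2 → ℝ | ∀ i, y i ∈ Set.Ioc 0 (2 * π)} : Set (Fin 2 → ℝ)) =ᵐ[volume] T2 := by
  have h1 : (Set.univ.pi fun _ : Fin 2 => Set.Ioc (0 : ℝ) (2 * π)) =ᵐ[volume]
      Set.Icc (fun _ => 0) (fun _ => 2 * π) := Measure.univ_pi_Ioc_ae_eq_Icc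
  have h2 : T2 = Set.Icc (0 : Fin 2 → ℝ) (fun _ => 2 * π) \ {fun _ => 2 * π} := by
    unfold T2
    ext x
    simp only [Set.mem_Ico, Set.mem_sdiff, Set.mem_Icc, Set.mem_singleton_iff, lt_iff_le_and_ne]
    tauto
  have h3 : T2 =ᵐ[volume] Set.Icc (0 : Fin 2 → ℝ) (fun _ => 2 * π) := by
    rw [h2]
    exact sdiff_null_ae_eq_self (measure_singleton _)
  have h4 : ({y : Fin 2 → ℝ | ∀ i, y i ∈ Set.Ioc 0 (2 * π)} : Set (Fin 2 → ℝ))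
      = Set.univ.pi fun _ : Fin 2 => Set.Ioc (0 : ℝ) (2 * π) := by
    ext x; simp
  rw [h4]
  exact h1.trans h3.symm

lemma map_tau : Measure.map tau volume
    = ENNReal.ofReal (1 / (2 * π) ^ 2) • (volume.restrict T2) := by
  ext s hs
  rw [Measure.map_apply measurable_tau hs, Measure.smul_apply, smul_eq_mul]
  rw [← lintegral_indicator_one (measurable_tau hs),
    UnitAddTorus.lintegral_preimage _ (fun _ => 0)]
  have hB : MeasurableSet {x : Fin 2 → ℝ | ∀ i, x i ∈ Set.Ioc (0 : ℝ) (0 + 1)} :=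
    MeasurableSet.univ_pi' (fun i => measurableSet_Ioc)
  have h1 : ∫⁻ x : Fin 2 → ℝ in {x : Fin 2 → ℝ | ∀ i, x i ∈ Set.Ioc (0 : ℝ) (0 + 1)},
      (tau ⁻¹' s).indicator (1 : UnitAddTorus (Fin 2) → ℝ≥0∞) (fun i => (x i : UnitAddCircle))
      = ∫⁻ x : Fin 2 → ℝ in {x : Fin 2 → ℝ | ∀ i, x i ∈ Set.Ioc (0 : ℝ) (0 + 1)},
        (((2 * π) • ·) ⁻¹' s).indicator (1 : (Fin 2 → ℝ) → ℝ≥0∞) x := by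
    refine setLIntegral_congr_fun hB fun x hx => ?_
    have : tau (fun i => (x i : UnitAddCircle)) = (2 * π) • x := by
      funext i
      unfold tau
      rw [AddCircle.equivIoc_coe_of_mem]
      · rfl
      · exact hx i
    by_cases hm : (2 * π) • x ∈ s
    · rw [Set.indicator_of_mem, Set.indicator_of_mem]
      · rfl
      · exact hm
      · change tau _ ∈ s
        rw [this]; exact hm
    · rw [Set.indicator_of_notMem, Set.indicator_of_notMem]
      · exact hm
      · change tau _ ∉ s
        rw [this]; exact hm
  rw [h1, lintegral_indicator_one (measurable_const_smul (2 * π) hs),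
    Measure.restrict_apply (measurable_const_smul (2 * π) hs), Measure.restrict_apply hs]
  have hpi := Real.pi_pos
  have h2 : ((2 * π) • · : (Fin 2 → ℝ) → (Fin 2 → ℝ)) ⁻¹' s
      ∩ {x : Fin 2 → ℝ | ∀ i, x i ∈ Set.Ioc (0 : ℝ) (0 + 1)}
      = ((2 * π) • · : (Fin 2 → ℝ) → (Fin 2 → ℝ)) ⁻¹'
        (s ∩ {y : Fin 2 → ℝ | ∀ i, y i ∈ Set.Ioc 0 (2 * π)}) := by
    ext x
    have h5 : ∀ i, (0 < 2 * π * x i ↔ 0 < x i) := fun i => by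
      constructor
      · intro h; by_contra h'; nlinarith
      · intro h; positivity
    have h6 : ∀ i, (2 * π * x i ≤ 2 * π ↔ x i ≤ 1) := fun i => by
      constructor
      · intro h; by_contra h'; nlinarith
      · intro h; nlinarith
    simp [h5, h6]
  rw [h2, Measure.addHaar_preimage_smul _ (by positivity)]
  congr 1
  · congr 1
    simp [abs_of_pos hpi]
  · exact measure_congr ((ae_eq_refl s).inter T2_ae_eq)

lemma ee_tau (k : Fin 2 → ℤ) (t : UnitAddTorus (Fin 2)) :
    ee k (tau t) = UnitAddTorus.mFourier k t := by
  unfold UnitAddTorus.mFourier ee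
  simp only [ContinuousMap.coe_mk, Fin.prod_univ_two]
  have h : ∀ i, t i = ((AddCircle.equivIoc (1 : ℝ) 0 (t i)).1 : UnitAddCircle) := by
    intro i
    exact ((AddCircle.equivIoc (1 : ℝ) 0).symm_apply_apply (t i)).symm
  conv_rhs => rw [h 0, h 1]
  rw [fourier_coe_apply, fourier_coe_apply, ← Complex.exp_add]
  congr 1
  unfold tau
  push_cast
  ring

lemma integral_tau (f : (Fin 2 → ℝ) → ℂ) (hf : AEStronglyMeasurable f (volume.restrict T2)) :
    ∫ t, f (tau t) = (1 / (2 * π) ^ 2 : ℝ) * ∫ x in T2, f x := by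
  have h1 : AEStronglyMeasurable f (Measure.map tau volume) := by
    rw [map_tau]; exact hf.smul_measure _
  rw [← integral_map measurable_tau.aemeasurable h1, map_tau, integral_smul_measure,
    ENNReal.toReal_ofReal (by positivity)]
  simp

lemma integral_tau_real (f : (Fin 2 → ℝ) → ℝ) (hf : AEStronglyMeasurable f (volume.restrict T2)) :
    ∫ t, f (tau t) = (1 / (2 * π) ^ 2 : ℝ) * ∫ x in T2, f x := by
  have h1 : AEStronglyMeasurable f (Measure.map tau volume) := by
    rw [map_tau]; exact hf.smul_measure _
  rw [← integral_map measurable_tau.aemeasurable h1, map_tau, integral_smul_measure,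
    ENNReal.toReal_ofReal (by positivity)]
  simp

lemma continuous_ee (k : Fin 2 → ℤ) : Continuous (ee k) := by
  unfold ee
  fun_prop

lemma integral_ee (k : Fin 2 → ℤ) :
    ∫ x in T2, ee k x = if k = 0 then (((2 * π) ^ 2 : ℝ) : ℂ) else 0 := by
  have h1 := integral_tau (ee k) (continuous_ee k).aestronglyMeasurable
  simp_rw [ee_tau] at h1
  have h2 := (orthonormal_iff_ite.mp <| UnitAddTorus.orthonormal_mFourier (d := Fin 2)) 0 k
  rw [ContinuousMap.inner_toLp] at h2
  have h3 : ∫ t, UnitAddTorus.mFourier k t = if k = 0 then (1 : ℂ) else 0 := by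
    have h4 : (0 = k) ↔ k = 0 := eq_comm
    simp only [h4] at h2
    rw [← h2]
    simp [UnitAddTorus.mFourier_zero]
  rw [h3] at h1
  have hpi := Real.pi_pos
  have hne : ((1 / (2 * π) ^ 2 : ℝ) : ℂ) ≠ 0 := by
    have : (1 / (2 * π) ^ 2 : ℝ) ≠ 0 := by positivity
    exact_mod_cast this
  apply mul_left_cancel₀ hne
  rw [← h1]
  split_ifs
  · rw [← Complex.ofReal_mul, one_div, inv_mul_cancel₀ (by positivity)]; simp
  · simp

/-- Fourier coefficient. -/
def fc (f : (Fin 2 → ℝ) → ℂ) (k : Fin 2 → ℤ) : ℂ :=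
  (1 / (2 * π) ^ 2 : ℝ) * ∫ x in T2, ee (-k) x * f x

lemma L2_approx (f : (Fin 2 → ℝ) → ℂ) (hf : MemLp f 2 (volume.restrict T2))
    (w : ℕ → (Fin 2 → ℤ) → ℝ) (w0 : ∀ N k, 0 ≤ w N k) (w1 : ∀ N k, w N k ≤ 1)
    (hw : ∀ k, Filter.Tendsto (fun N => w N k) Filter.atTop (nhds 1)) :
    Filter.Tendsto (fun N => ∫ x in T2, ‖f x - ∑ k ∈ box N, (w N k : ℂ) * fc f k * ee k x‖ ^ 2)
      Filter.atTop (nhds 0) := by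
  have hft : MemLp (fun t => f (tau t)) 2 volume := by
    refine MemLp.comp_of_map (f := tau) ?_ measurable_tau.aemeasurable
    rw [map_tau]
    exact hf.smul_measure (by simp)
  set F := hft.toLp with hF
  have hFc : ∀ k, UnitAddTorus.mFourierCoeff F k = fc f k := by
    intro k
    unfold UnitAddTorus.mFourierCoeff fc
    rw [← integral_tau (fun x => ee (-k) x * f x)
      ((continuous_ee _).aestronglyMeasurable.mul hf.aestronglyMeasurable)]
    apply integral_congr_ae
    filter_upwards [hft.coeFn_toLp] with t ht
    rw [ht, ee_tau, smul_eq_mul]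
  set G : ℕ → Lp ℂ 2 (volume : Measure (UnitAddTorus (Fin 2))) := fun N =>
    F - ∑ k ∈ box N, ((w N k : ℂ) * fc f k) • UnitAddTorus.mFourierLp 2 k with hG
  have hGc : ∀ N k, UnitAddTorus.mFourierCoeff (G N) k
      = (1 - (if k ∈ box N then (w N k : ℂ) else 0)) * fc f k := by
    intro N k
    rw [← UnitAddTorus.mFourierBasis_repr, HilbertBasis.repr_apply_apply, hG]
    simp only
    rw [inner_sub_right, inner_sum, ← HilbertBasis.repr_apply_apply,
      UnitAddTorus.mFourierBasis_repr, hFc]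
    simp_rw [inner_smul_right, UnitAddTorus.coe_mFourierBasis,
      (orthonormal_iff_ite.mp <| UnitAddTorus.orthonormal_mFourier (d := Fin 2))]
    simp only [mul_ite, mul_one, mul_zero, Finset.sum_ite_eq]
    split_ifs <;> ring
  have hGi : ∀ N, ∫ t, ‖G N t‖ ^ 2 = (1 / (2 * π) ^ 2 : ℝ) *
      ∫ x in T2, ‖f x - ∑ k ∈ box N, (w N k : ℂ) * fc f k * ee k x‖ ^ 2 := by
    intro N
    rw [← integral_tau_real]
    · apply integral_congr_ae
      have h1 := Lp.coeFn_sub F (∑ k ∈ box N, ((w N k : ℂ) * fc f k) • UnitAddTorus.mFourierLp 2 k)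
      have h2 : ⇑(∑ k ∈ box N, ((w N k : ℂ) * fc f k) • UnitAddTorus.mFourierLp 2 k
          : Lp ℂ 2 (volume : Measure (UnitAddTorus (Fin 2)))) =ᵐ[volume]
          fun t => ∑ k ∈ box N, ((w N k : ℂ) * fc f k) * UnitAddTorus.mFourier k t := by
        have h3 : ∀ k, ⇑(((w N k : ℂ) * fc f k) • UnitAddTorus.mFourierLp 2 k
            : Lp ℂ 2 (volume : Measure (UnitAddTorus (Fin 2)))) =ᵐ[volume]
            fun t => ((w N k : ℂ) * fc f k) * UnitAddTorus.mFourier k t := by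
          intro k
          filter_upwards [Lp.coeFn_smul ((w N k : ℂ) * fc f k)
            (UnitAddTorus.mFourierLp 2 k : Lp ℂ 2 (volume : Measure (UnitAddTorus (Fin 2)))),
            UnitAddTorus.coeFn_mFourierLp 2 k] with t h4 h5
          rw [h4, Pi.smul_apply, h5, smul_eq_mul]
        have h6 := (ae_all_iff (μ := (volume : Measure (UnitAddTorus (Fin 2))))).2 h3
        filter_upwards [Lp.coeFn_finsetSum (box N) (fun k => (((w N k : ℂ) * fc f k) •
          UnitAddTorus.mFourierLp 2 k : Lp ℂ 2 (volume : Measure (UnitAddTorus (Fin 2))))), h6]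
          with t h7 h8
        rw [h7]
        simp only [Finset.sum_apply]
        exact Finset.sum_congr rfl fun k _ => h8 k
      filter_upwards [h1, h2, hft.coeFn_toLp] with t h3 h4 h5
      rw [hG]
      simp only
      rw [h3, Pi.sub_apply, h4, hF, h5]
      simp_rw [ee_tau]
    · refine ((hf.aestronglyMeasurable.sub ?_).norm).pow 2
      exact (continuous_finsetSum _ fun k _ => by
        have := continuous_ee k
        fun_prop).aestronglyMeasurable
  have hsum : Summable fun k => ‖fc f k‖ ^ 2 := by
    have := (UnitAddTorus.hasSum_sq_mFourierCoeff F).summable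
    simp_rw [hFc] at this
    exact this
  have hpi := Real.pi_pos
  have key : Filter.Tendsto (fun N => ∑' k, ‖UnitAddTorus.mFourierCoeff (G N) k‖ ^ 2)
      Filter.atTop (nhds (∑' _ : Fin 2 → ℤ, (0 : ℝ))) := by
    refine tendsto_tsum_of_dominated_convergence hsum ?_ ?_
    · intro k
      simp_rw [hGc]
      have hev : ∀ᶠ N in Filter.atTop, k ∈ box N := by
        filter_upwards [Filter.eventually_ge_atTop ((k 0).natAbs + (k 1).natAbs)] with N hN
        unfold box
        rw [Fintype.mem_piFinset]
        intro i
        rw [Finset.mem_Icc]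
        fin_cases i
        · change -(N : ℤ) ≤ k 0 ∧ k 0 ≤ N
          omega
        · change -(N : ℤ) ≤ k 1 ∧ k 1 ≤ N
          omega
      have h1 : Filter.Tendsto (fun N => ‖(1 - (w N k : ℂ)) * fc f k‖ ^ 2) Filter.atTop (nhds 0) := by
        have h2 : Filter.Tendsto (fun N => (w N k : ℂ)) Filter.atTop (nhds ((1 : ℝ) : ℂ)) :=
          (Complex.continuous_ofReal.tendsto 1).comp (hw k)
        have h3 := (((h2.const_sub 1).mul_const (fc f k)).norm).pow 2
        simpa using h3
      refine h1.congr' ?_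
      filter_upwards [hev] with N hN
      rw [if_pos hN]
    · refine Filter.Eventually.of_forall fun N k => ?_
      rw [hGc, Real.norm_of_nonneg (by positivity)]
      have : ‖(1 - (if k ∈ box N then (w N k : ℂ) else 0))‖ ≤ 1 := by
        split_ifs
        · rw [← Complex.ofReal_one, ← Complex.ofReal_sub, Complex.norm_real, Real.norm_eq_abs, abs_le]
          constructor <;> linarith [w0 N k, w1 N k]
        · simp
      rw [norm_mul]
      gcongr
      exact mul_le_of_le_one_left (norm_nonneg _) this
  simp_rw [(UnitAddTorus.hasSum_sq_mFourierCoeff (G _)).tsum_eq, hGi] at key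
  have h2 := key.const_mul ((2 * π) ^ 2)
  simp only [tsum_zero, mul_zero] at h2
  refine h2.congr fun N => ?_
  rw [← mul_assoc, one_div, mul_inv_cancel₀ (by positivity), one_mul]

end torus


/-! ### Algebra of exponentials and Fourier form of the hypotheses -/

lemma ee_add (k l : Fin 2 → ℤ) (x : Fin 2 → ℝ) : ee (k + l) x = ee k x * ee l x := by
  unfold ee
  rw [← Complex.exp_add]
  congr 1
  simp only [Pi.add_apply]
  push_cast
  ring

lemma ee_zero (x : Fin 2 → ℝ) : ee 0 x = 1 := by
  unfold ee
  simp

/-- The phase. -/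
def th (k : Fin 2 → ℤ) (x : Fin 2 → ℝ) : ℝ := k 0 * x 0 + k 1 * x 1

lemma ee_eq (k : Fin 2 → ℤ) (x : Fin 2 → ℝ) :
    ee k x = (Real.cos (th k x) : ℂ) + Complex.I * (Real.sin (th k x) : ℂ) := by
  unfold ee th
  rw [mul_comm Complex.I, Complex.exp_mul_I]
  push_cast
  ring

lemma ee_neg (k : Fin 2 → ℤ) (x : Fin 2 → ℝ) : ee (-k) x = (starRingEnd ℂ) (ee k x) := by
  rw [ee_eq, ee_eq]
  have : th (-k) x = - th k x := by unfold th; simp only [Pi.neg_apply]; push_cast; ring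
  rw [this]
  simp only [Real.cos_neg, Real.sin_neg, map_add, map_mul, Complex.conj_ofReal, Complex.conj_I]
  push_cast
  ring

lemma ee_sub (k : Fin 2 → ℤ) (x y : Fin 2 → ℝ) : ee k (x - y) = ee k x * ee (-k) y := by
  unfold ee
  rw [← Complex.exp_add]
  congr 1
  simp only [Pi.neg_apply, Pi.sub_apply]
  push_cast
  ring

lemma th_per (k m : Fin 2 → ℤ) (x : Fin 2 → ℝ) : th k (x + fun i => 2 * π * (m i : ℝ))
    = th k x + ((k 0 * m 0 + k 1 * m 1 : ℤ) : ℝ) * (2 * π) := by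
  unfold th
  simp only [Pi.add_apply]
  push_cast
  ring

lemma ee_per (k m : Fin 2 → ℤ) (x : Fin 2 → ℝ) : ee k (x + fun i => 2 * π * (m i : ℝ)) = ee k x := by
  rw [ee_eq, ee_eq, th_per, Real.cos_add_int_mul_two_pi, Real.sin_add_int_mul_two_pi]

lemma integrable_T2_of_continuous {f : (Fin 2 → ℝ) → ℂ} (hf : Continuous f) :
    Integrable f (volume.restrict T2) := by
  have h : IntegrableOn f (Set.Icc 0 (fun _ => 2 * π)) volume :=
    hf.continuousOn.integrableOn_compact isCompact_Icc
  exact h.mono_set Set.Ico_subset_Icc_self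

lemma parseval_fin (s : Finset (Fin 2 → ℤ)) (a : (Fin 2 → ℤ) → ℂ) :
    ∫ x in T2, ‖∑ k ∈ s, a k * ee k x‖ ^ 2 = (2 * π) ^ 2 * ∑ k ∈ s, ‖a k‖ ^ 2 := by
  have h1 : ∀ x, ((‖∑ k ∈ s, a k * ee k x‖ ^ 2 : ℝ) : ℂ)
      = ∑ k ∈ s, ∑ l ∈ s, a k * (starRingEnd ℂ) (a l) * ee (k - l) x := by
    intro x
    rw [Complex.ofReal_pow, ← Complex.mul_conj', map_sum, Finset.sum_mul_sum]
    refine Finset.sum_congr rfl fun k _ => Finset.sum_congr rfl fun l _ => ?_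
    rw [sub_eq_add_neg, ee_add, ee_neg, map_mul]
    ring
  have h2 : ((∫ x in T2, ‖∑ k ∈ s, a k * ee k x‖ ^ 2 : ℝ) : ℂ)
      = (((2 * π) ^ 2 * ∑ k ∈ s, ‖a k‖ ^ 2 : ℝ) : ℂ) := by
    rw [← integral_complex_ofReal]
    simp_rw [h1]
    have hInt : ∀ k l, Integrable (fun x => a k * (starRingEnd ℂ) (a l) * ee (k - l) x)
        (volume.restrict T2) := fun k l =>
      integrable_T2_of_continuous (continuous_const.mul (continuous_ee _))
    rw [integral_finsetSum _ (fun k _ => integrable_finsetSum _ fun l _ => hInt k l)]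
    push_cast
    rw [Finset.mul_sum]
    refine Finset.sum_congr rfl fun k hk => ?_
    rw [integral_finsetSum _ (fun l _ => hInt k l)]
    simp_rw [integral_const_mul, integral_ee, sub_eq_zero]
    simp only [mul_ite, mul_zero, Finset.sum_ite_eq, hk, if_true]
    rw [Complex.mul_conj']
    push_cast
    ring
  exact_mod_cast h2

/-- Integral of a velocity component against an exponential. -/
def Vc (u : (Fin 2 → ℝ) → (Fin 2 → ℝ)) (i : Fin 2) (m : Fin 2 → ℤ) : ℂ :=
  ∫ x in T2, (u x i : ℂ) * ee m x

/-- Integral of a quadratic expression against an exponential. -/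
def Qc (u : (Fin 2 → ℝ) → (Fin 2 → ℝ)) (i j : Fin 2) (m : Fin 2 → ℤ) : ℂ :=
  ∫ x in T2, ((u x i * u x j : ℝ) : ℂ) * ee m x

lemma memLp_comp (u : (Fin 2 → ℝ) → (Fin 2 → ℝ)) (hu : Measurable u) (h : L21 u < ⊤) (i : Fin 2) :
    MemLp (fun x => u x i) 2 (volume.restrict T2) := by
  refine ⟨by fun_prop, ?_⟩
  rw [eLpNorm_lt_top_iff_lintegral_rpow_enorm_lt_top (by norm_num) (by norm_num)]
  refine lt_of_le_of_lt ?_ (L2_of_L21 u hu h)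
  refine lintegral_mono fun x => ?_
  have h1 : |u x i| ≤ enorm2 (u x) := by
    unfold enorm2
    apply Real.abs_le_sqrt
    fin_cases i
    · change u x 0 ^ 2 ≤ _
      nlinarith [sq_nonneg (u x 1)]
    · change u x 1 ^ 2 ≤ _
      nlinarith [sq_nonneg (u x 0)]
  have h2 : ‖u x i‖ₑ ≤ ENNReal.ofReal (enorm2 (u x)) := by
    rw [← ofReal_norm]
    exact ENNReal.ofReal_le_ofReal h1
  simp only [ENNReal.toReal_ofNat, ENNReal.rpow_ofNat]
  rw [sq]
  exact mul_le_mul' h2 h2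

instance instFiniteT2 : IsFiniteMeasure (volume.restrict T2) :=
  ⟨by rw [Measure.restrict_apply_univ]; exact volume_T2_lt_top⟩

lemma integrable_mul_of_bdd {f : (Fin 2 → ℝ) → ℝ} (hf : Integrable f (volume.restrict T2))
    {g : (Fin 2 → ℝ) → ℝ} (hg : Continuous g) (C : ℝ) (hb : ∀ x, |g x| ≤ C) :
    Integrable (fun x => f x * g x) (volume.restrict T2) :=
  hf.mul_bdd (c := C) hg.aestronglyMeasurable (Filter.Eventually.of_forall hb)

lemma continuous_th (k : Fin 2 → ℤ) : Continuous (th k) := by unfold th; fun_prop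

lemma integral_mul_ee (f : (Fin 2 → ℝ) → ℝ) (hf : Integrable f (volume.restrict T2))
    (k : Fin 2 → ℤ) : ∫ x in T2, (f x : ℂ) * ee k x
      = ((∫ x in T2, f x * Real.cos (th k x) : ℝ) : ℂ)
        + Complex.I * ((∫ x in T2, f x * Real.sin (th k x) : ℝ) : ℂ) := by
  have hc := integrable_mul_of_bdd hf (g := fun x => Real.cos (th k x))
    (Real.continuous_cos.comp (continuous_th k)) 1 (fun x => Real.abs_cos_le_one _)
  have hs := integrable_mul_of_bdd hf (g := fun x => Real.sin (th k x))
    (Real.continuous_sin.comp (continuous_th k)) 1 (fun x => Real.abs_sin_le_one _)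
  rw [← integral_complex_ofReal, ← integral_complex_ofReal, ← integral_const_mul,
    ← integral_add hc.ofReal (hs.ofReal.const_mul _)]
  congr 1
  funext x
  rw [ee_eq]
  push_cast
  ring

lemma contDiff_th (k : Fin 2 → ℤ) : ContDiff ℝ (⊤ : ℕ∞) (th k) := by
  unfold th
  fun_prop

lemma pd_wave (k : Fin 2 → ℤ) (g g' : ℝ → ℝ) (hg : ∀ t, HasDerivAt g (g' t) t) (c : ℝ) (i : Fin 2)
    (x : Fin 2 → ℝ) : pd 2 i (fun y => c * g (th k y)) x = c * k i * g' (th k x) := by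
  unfold pd
  have h0 : HasFDerivAt (fun y : Fin 2 → ℝ => y 0) (ContinuousLinearMap.proj (R := ℝ) 0) x :=
    (ContinuousLinearMap.proj (R := ℝ) (φ := fun _ : Fin 2 => ℝ) 0).hasFDerivAt
  have h1 : HasFDerivAt (fun y : Fin 2 → ℝ => y 1) (ContinuousLinearMap.proj (R := ℝ) 1) x :=
    (ContinuousLinearMap.proj (R := ℝ) (φ := fun _ : Fin 2 => ℝ) 1).hasFDerivAt
  have h2 : HasFDerivAt (th k) _ x := (h0.const_mul (k 0 : ℝ)).add (h1.const_mul (k 1 : ℝ))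
  have h3 := ((hg (th k x)).comp_hasFDerivAt x h2).const_mul c
  have h4 : HasFDerivAt (fun y => c * g (th k y)) _ x := h3
  rw [h4.fderiv]
  fin_cases i <;> simp <;> ring

lemma lap_wave (k : Fin 2 → ℤ) (g g' : ℝ → ℝ) (hg : ∀ t, HasDerivAt g (g' t) t)
    (hg' : ∀ t, HasDerivAt g' (-g t) t) (c : ℝ)
    (x : Fin 2 → ℝ) : lap 2 (fun y => c * g (th k y)) x = - nsq k * c * g (th k x) := by
  unfold lap
  have h : ∀ i, pd 2 i (fun y => c * g (th k y)) = fun y => (c * k i) * g' (th k y) := fun i =>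
    funext fun y => pd_wave k g g' hg c i y
  simp_rw [h]
  simp_rw [pd_wave k g' (fun t => -g t) hg']
  rw [Fin.sum_univ_two]
  unfold nsq
  ring

lemma hasDerivAt_neg_sin (t : ℝ) : HasDerivAt (fun t => -Real.sin t) (-Real.cos t) t :=
  (Real.hasDerivAt_sin t).fun_neg

lemma div_fourier (u : (Fin 2 → ℝ) → (Fin 2 → ℝ))
    (hu1 : ∀ i, Integrable (fun x => u x i) (volume.restrict T2))
    (hu_div : ∀ ψ : (Fin 2 → ℝ) → ℝ, ContDiff ℝ (⊤ : ℕ∞) ψ → PerF 2 ψ →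
      ∫ x in T2, (∑ i, u x i * pd 2 i ψ x) = 0) (k : Fin 2 → ℤ) :
    (k 0 : ℂ) * Vc u 0 k + (k 1 : ℂ) * Vc u 1 k = 0 := by
  have key : ∀ g g' : ℝ → ℝ, (∀ t, HasDerivAt g (g' t) t) → ContDiff ℝ (⊤ : ℕ∞) g →
      Continuous g' → (∀ t, |g' t| ≤ 1) → (∀ (t : ℝ) (n : ℤ), g (t + n * (2 * π)) = g t) →
      k 0 * (∫ x in T2, u x 0 * g' (th k x)) + k 1 * (∫ x in T2, u x 1 * g' (th k x)) = 0 := by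
    intro g g' h1 h2 h3 h4 h5
    have h := hu_div (fun y => 1 * g (th k y)) (contDiff_const.mul (h2.comp (contDiff_th k)))
      (fun x m => by simp only; rw [th_per, h5])
    simp_rw [pd_wave k g g' h1, Fin.sum_univ_two] at h
    rw [← h, ← integral_const_mul, ← integral_const_mul, ← integral_add]
    · congr 1
      funext x
      ring
    · exact (integrable_mul_of_bdd (hu1 0) (h3.comp (continuous_th k)) 1 (fun _ => h4 _)).const_mul _
    · exact (integrable_mul_of_bdd (hu1 1) (h3.comp (continuous_th k)) 1 (fun _ => h4 _)).const_mul _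
  have hs := key Real.sin Real.cos Real.hasDerivAt_sin Real.contDiff_sin Real.continuous_cos
    Real.abs_cos_le_one Real.sin_add_int_mul_two_pi
  have hc := key Real.cos (fun t => -Real.sin t) Real.hasDerivAt_cos Real.contDiff_cos
    Real.continuous_sin.neg (fun t => by rw [abs_neg]; exact Real.abs_sin_le_one t)
    Real.cos_add_int_mul_two_pi
  simp only [mul_neg, integral_neg] at hc
  unfold Vc
  rw [integral_mul_ee _ (hu1 0), integral_mul_ee _ (hu1 1)]
  have hs' : (((k 0 : ℝ) * (∫ x in T2, u x 0 * Real.cos (th k x))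
      + k 1 * (∫ x in T2, u x 1 * Real.cos (th k x)) : ℝ) : ℂ) = 0 := by rw [hs]; simp
  have hc' : ((-((k 0 : ℝ) * (∫ x in T2, u x 0 * Real.sin (th k x)))
      + -(k 1 * (∫ x in T2, u x 1 * Real.sin (th k x))) : ℝ) : ℂ) = 0 := by rw [hc]; simp
  push_cast at hs' hc'
  linear_combination hs' - Complex.I * hc'

lemma NS_fourier (u : (Fin 2 → ℝ) → (Fin 2 → ℝ))
    (hu1 : ∀ i, Integrable (fun x => u x i) (volume.restrict T2))
    (hu2 : ∀ i j, Integrable (fun x => u x i * u x j) (volume.restrict T2))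
    (hu_NS : ∀ φ : (Fin 2 → ℝ) → (Fin 2 → ℝ), ContDiff ℝ (⊤ : ℕ∞) φ → PerF 2 φ →
      (∀ x, divg 2 φ x = 0) →
      (∫ x in T2, (∑ j, u x j * lap 2 (fun y => φ y j) x))
        + ∑ i, ∑ j, ∫ x in T2, u x i * u x j * pd 2 i (fun y => φ y j) x = 0) (k : Fin 2 → ℤ)
    (p : Fin 2 → ℤ) (hp : p 0 * k 0 + p 1 * k 1 = 0) :
    -(nsq k : ℂ) * ∑ j, (p j : ℂ) * Vc u j k
      + Complex.I * ∑ i, ∑ j, (k i : ℂ) * (p j : ℂ) * Qc u i j k = 0 := by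
  have hp' : (p 0 : ℝ) * k 0 + p 1 * k 1 = 0 := by exact_mod_cast hp
  have key : ∀ g g' : ℝ → ℝ, (∀ t, HasDerivAt g (g' t) t) → (∀ t, HasDerivAt g' (-g t) t) →
      ContDiff ℝ (⊤ : ℕ∞) g →
      Continuous g' → (∀ t, |g t| ≤ 1) → (∀ t, |g' t| ≤ 1) →
      (∀ (t : ℝ) (n : ℤ), g (t + n * (2 * π)) = g t) →
      -nsq k * (∑ j, p j * ∫ x in T2, u x j * g (th k x))
        + ∑ i, ∑ j, k i * p j * ∫ x in T2, (u x i * u x j) * g' (th k x) = 0 := by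
    intro g g' h1 h1' h2 h3 h4 h4' h5
    have h := hu_NS (fun y j => p j * g (th k y))
      (contDiff_pi.2 fun j => contDiff_const.mul (h2.comp (contDiff_th k)))
      (fun x m => by funext j; simp only; rw [th_per, h5])
      (fun x => by
        unfold divg
        simp_rw [pd_wave k g g' h1, Fin.sum_univ_two]
        linear_combination g' (th k x) * hp')
    simp_rw [pd_wave k g g' h1, lap_wave k g g' h1 h1'] at h
    rw [← h]
    congr 1
    · rw [Fin.sum_univ_two, ← integral_const_mul, ← integral_const_mul, ← integral_add,
        ← integral_const_mul]
      · congr 1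
        funext x
        rw [Fin.sum_univ_two]
        ring
      · exact (integrable_mul_of_bdd (hu1 0) (h2.continuous.comp (continuous_th k)) 1
          (fun _ => h4 _)).const_mul _
      · exact (integrable_mul_of_bdd (hu1 1) (h2.continuous.comp (continuous_th k)) 1
          (fun _ => h4 _)).const_mul _
    · refine Finset.sum_congr rfl fun i _ => Finset.sum_congr rfl fun j _ => ?_
      rw [← integral_const_mul]
      congr 1
      funext x
      ring
  have hs := key Real.sin Real.cos Real.hasDerivAt_sin Real.hasDerivAt_cos Real.contDiff_sin
    Real.continuous_cos Real.abs_sin_le_one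
    Real.abs_cos_le_one Real.sin_add_int_mul_two_pi
  have hc := key Real.cos (fun t => -Real.sin t) Real.hasDerivAt_cos hasDerivAt_neg_sin
    Real.contDiff_cos
    Real.continuous_sin.neg Real.abs_cos_le_one
    (fun t => by rw [abs_neg]; exact Real.abs_sin_le_one t)
    Real.cos_add_int_mul_two_pi
  have hs' := congrArg (fun r : ℝ => (r : ℂ)) hs
  have hc' := congrArg (fun r : ℝ => (r : ℂ)) hc
  unfold Vc Qc
  simp_rw [integral_mul_ee _ (hu1 _), integral_mul_ee _ (hu2 _ _)]
  simp only [mul_neg, integral_neg, Fin.sum_univ_two] at hs' hc' ⊢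
  push_cast at hs' hc' ⊢
  linear_combination hc' + Complex.I * hs' + (
    (k 0 : ℂ) * p 0 * ((∫ x in T2, u x 0 * u x 0 * Real.sin (th k x) : ℝ) : ℂ)
    + (k 0 : ℂ) * p 1 * ((∫ x in T2, u x 0 * u x 1 * Real.sin (th k x) : ℝ) : ℂ)
    + (k 1 : ℂ) * p 0 * ((∫ x in T2, u x 1 * u x 0 * Real.sin (th k x) : ℝ) : ℂ)
    + (k 1 : ℂ) * p 1 * ((∫ x in T2, u x 1 * u x 1 * Real.sin (th k x) : ℝ) : ℂ)) * Complex.I_sq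


/-! ### Galerkin system -/

lemma galerkin_energy {ι : Type*} [Fintype ι] (w : ι → ℝ) (A : ι → ι → ℂ)
    (hA : ∀ k l, (starRingEnd ℂ) (A k l) = -A l k) (f c : ι → ℂ)
    (hc : ∀ k, (w k : ℂ) * c k - ∑ l, A k l * c l = f k) :
    ∑ k, w k * ‖c k‖ ^ 2 = (∑ k, (starRingEnd ℂ) (c k) * f k).re := by
  set Z := ∑ k, ∑ l, (starRingEnd ℂ) (c k) * (A k l * c l) with hZ
  have h1 : (starRingEnd ℂ) Z = -Z := by
    rw [hZ, map_sum, ← Finset.sum_neg_distrib]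
    simp_rw [map_sum]
    rw [Finset.sum_comm]
    refine Finset.sum_congr rfl fun k _ => ?_
    rw [← Finset.sum_neg_distrib]
    refine Finset.sum_congr rfl fun l _ => ?_
    rw [map_mul, map_mul, hA, Complex.conj_conj]
    ring
  have h2 : Z.re = 0 := by
    have := congrArg Complex.re h1
    simp only [Complex.conj_re, Complex.neg_re] at this
    linarith
  have h3 : ∑ k, (starRingEnd ℂ) (c k) * f k = ((∑ k, w k * ‖c k‖ ^ 2 : ℝ) : ℂ) - Z := by
    rw [hZ]
    push_cast
    rw [← Finset.sum_sub_distrib]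
    refine Finset.sum_congr rfl fun k _ => ?_
    rw [← hc k, mul_sub, Finset.mul_sum, ← Complex.conj_mul']
    ring
  rw [h3, Complex.sub_re, h2, Complex.ofReal_re, sub_zero]

lemma galerkin_solve {ι : Type*} [Fintype ι] (w : ι → ℝ) (hw : ∀ k, 1 ≤ w k)
    (A : ι → ι → ℂ)
    (hA : ∀ k l, (starRingEnd ℂ) (A k l) = -A l k) (f : ι → ℂ) :
    ∃ c : ι → ℂ, ∀ k, (w k : ℂ) * c k - ∑ l, A k l * c l = f k := by
  let L : (ι → ℂ) →ₗ[ℂ] (ι → ℂ) :=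
    { toFun := fun c k => (w k : ℂ) * c k - ∑ l, A k l * c l
      map_add' := by
        intro c d
        funext k
        simp only [Pi.add_apply, mul_add, Finset.sum_add_distrib]
        ring
      map_smul' := by
        intro r c
        funext k
        simp only [Pi.smul_apply, smul_eq_mul, RingHom.id_apply, mul_sub, Finset.mul_sum]
        congr 1
        · ring
        · refine Finset.sum_congr rfl fun l _ => ?_
          ring }
  have hinj : Function.Injective L := by
    rw [injective_iff_map_eq_zero]
    intro c hc
    have h := galerkin_energy w A hA 0 c (fun k => congrFun hc k)
    simp only [Pi.zero_apply, mul_zero, Finset.sum_const_zero, Complex.zero_re] at h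
    have hnn : ∀ k ∈ Finset.univ, 0 ≤ w k * ‖c k‖ ^ 2 := fun k _ => by
      have := hw k
      positivity
    rw [Finset.sum_eq_zero_iff_of_nonneg hnn] at h
    funext k
    have h1 := h k (Finset.mem_univ k)
    have h2 : w k ≠ 0 := by linarith [hw k]
    simpa [h2] using h1
  obtain ⟨c, hc⟩ := (LinearMap.injective_iff_surjective.1 hinj) f
  exact ⟨c, fun k => congrFun hc k⟩

/-- Bilinear coefficients. -/
def bb (V : Fin 2 → (Fin 2 → ℤ) → ℂ) (l k : Fin 2 → ℤ) : ℂ :=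
  Complex.I * ((l 0 : ℂ) * k 0 + (l 1 : ℂ) * k 1) * ((l 0 : ℂ) * V 0 (l - k) + (l 1 : ℂ) * V 1 (l - k))

lemma bb_skew (V : Fin 2 → (Fin 2 → ℤ) → ℂ) (hV : ∀ i m, V i (-m) = (starRingEnd ℂ) (V i m))
    (hd : ∀ m : Fin 2 → ℤ, (m 0 : ℂ) * V 0 m + (m 1 : ℂ) * V 1 m = 0) (l k : Fin 2 → ℤ) :
    (starRingEnd ℂ) (bb V k l) = - bb V l k := by
  unfold bb
  have h1 := hd (l - k)
  simp only [Pi.sub_apply] at h1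
  push_cast at h1
  simp only [map_mul, map_add, Complex.conj_I, ← hV, neg_sub, map_intCast]
  linear_combination (Complex.I * ((l 0 : ℂ) * k 0 + (l 1 : ℂ) * k 1)) * h1

/-- The truncated frequency set. -/
def Lam (N : ℕ) : Finset (Fin 2 → ℤ) := (box N).erase 0

/-- The square root of the mollifier. -/
def jj (N : ℕ) (k : Fin 2 → ℤ) : ℝ := Real.exp (-nsq k / (2 * N))

lemma nsq_zero_iff {k : Fin 2 → ℤ} : nsq k = 0 ↔ k = 0 := by
  constructor
  · intro h
    obtain ⟨h0, h1⟩ := eq_zero_of_nsq h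
    funext i
    fin_cases i
    · exact h0
    · exact h1
  · rintro rfl
    simp [nsq]

lemma one_le_nsq' {k : Fin 2 → ℤ} (h : k ≠ 0) : 1 ≤ nsq k :=
  one_le_nsq (fun h' => h (nsq_zero_iff.1 h'))

lemma galerkin (V : Fin 2 → (Fin 2 → ℤ) → ℂ) (hV : ∀ i m, V i (-m) = (starRingEnd ℂ) (V i m))
    (hd : ∀ m : Fin 2 → ℤ, (m 0 : ℂ) * V 0 m + (m 1 : ℂ) * V 1 m = 0) (α : ℝ) (N : ℕ)
    (k₀ : Fin 2 → ℤ) :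
    ∃ c : (Fin 2 → ℤ) → ℂ,
      (∀ k ∈ Lam N, ((nsq k ^ 2 : ℝ) : ℂ) * c k
        - (α * jj N k : ℝ) * ∑ l ∈ Lam N, (jj N l : ℂ) * c l * bb V l k = if k = k₀ then 1 else 0) ∧
      ∑ k ∈ Lam N, nsq k ^ 2 * ‖c k‖ ^ 2 ≤ 1 := by
  classical
  have hw : ∀ k : Lam N, 1 ≤ nsq k.1 ^ 2 := fun k => by
    have := one_le_nsq' (Finset.ne_of_mem_erase k.2)
    nlinarith
  have hA : ∀ k l : Lam N, (starRingEnd ℂ) ((α * jj N k.1 * jj N l.1 : ℝ) * bb V l.1 k.1)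
      = -((α * jj N l.1 * jj N k.1 : ℝ) * bb V k.1 l.1) := by
    intro k l
    rw [map_mul, bb_skew V hV hd, Complex.conj_ofReal]
    push_cast
    ring
  set f : Lam N → ℂ := fun k => if k.1 = k₀ then 1 else 0 with hf
  obtain ⟨c, hc⟩ := galerkin_solve (fun k : Lam N => nsq k.1 ^ 2) hw
    (fun k l => (α * jj N k.1 * jj N l.1 : ℝ) * bb V l.1 k.1) hA f
  have hE := galerkin_energy (fun k : Lam N => nsq k.1 ^ 2)
    (fun k l => (α * jj N k.1 * jj N l.1 : ℝ) * bb V l.1 k.1) hA f c hc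
  have hE1 : ∑ k : Lam N, nsq k.1 ^ 2 * ‖c k‖ ^ 2 ≤ 1 := by
    by_cases hk : k₀ ∈ Lam N
    · have h1 : ∑ k : Lam N, (starRingEnd ℂ) (c k) * f k = (starRingEnd ℂ) (c ⟨k₀, hk⟩) := by
        rw [Finset.sum_eq_single ⟨k₀, hk⟩]
        · simp [hf]
        · intro b _ hb
          have : b.1 ≠ k₀ := fun h => hb (Subtype.ext h)
          simp [hf, this]
        · simp
      rw [h1, Complex.conj_re] at hE
      have h2 : (c ⟨k₀, hk⟩).re ≤ ‖c ⟨k₀, hk⟩‖ := Complex.re_le_norm _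
      have h3 : nsq k₀ ^ 2 * ‖c ⟨k₀, hk⟩‖ ^ 2 ≤ ∑ k : Lam N, nsq k.1 ^ 2 * ‖c k‖ ^ 2 :=
        Finset.single_le_sum (f := fun k : Lam N => nsq k.1 ^ 2 * ‖c k‖ ^ 2)
          (fun k _ => by positivity) (Finset.mem_univ (⟨k₀, hk⟩ : Lam N))
      have h4 := hw ⟨k₀, hk⟩
      simp only at h4
      have h5 : ‖c ⟨k₀, hk⟩‖ ^ 2 ≤ nsq k₀ ^ 2 * ‖c ⟨k₀, hk⟩‖ ^ 2 := le_mul_of_one_le_left (by positivity) h4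
      have h6 : ‖c ⟨k₀, hk⟩‖ ≤ 1 := by nlinarith [norm_nonneg (c ⟨k₀, hk⟩)]
      linarith
    · have h1 : f = 0 := by
        funext k
        have : k.1 ≠ k₀ := fun h => hk (h ▸ k.2)
        simp [hf, this]
      rw [hE, h1]
      simp
  refine ⟨fun k => if h : k ∈ Lam N then c ⟨k, h⟩ else 0, ?_, ?_⟩
  · intro k hk
    have h1 := hc ⟨k, hk⟩
    simp only [hk, dif_pos]
    rw [← Finset.sum_coe_sort (Lam N)]
    simp only [Finset.coe_mem, dif_pos]
    simp only [hf] at h1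
    rw [← h1, Finset.mul_sum]
    congr 1
    refine Finset.sum_congr rfl fun l _ => ?_
    push_cast
    ring
  · rw [← Finset.sum_coe_sort (Lam N)]
    simp only [Finset.coe_mem, dif_pos]
    exact hE1


/-! ### A priori bound: the core estimate -/

lemma apriori_core (u : (Fin 2 → ℝ) → (Fin 2 → ℝ)) (hu : Measurable u) (hL : L21 u < ⊤)
    (K B c : ℝ) (hK : 0 < K) (hB : 0 ≤ B) (hc : 0 < c) :
    ∃ D : ℝ, 0 ≤ D ∧ ∀ (κ P : (Fin 2 → ℝ) → ℝ), Measurable κ → Measurable P → (∀ y, 0 ≤ κ y) →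
      (∀ y, 0 ≤ P y) →
      (∀ E ⊆ T2, MeasurableSet E →
        ∫⁻ y in E, ENNReal.ofReal (κ y) ≤ ENNReal.ofReal K * volume E ^ (1 / 2 : ℝ)) →
      ∀ S : ℝ, 0 < S → (∀ y, P y ≤ S) →
      (∫⁻ y in T2, ENNReal.ofReal (P y) ^ 2 ≤ ENNReal.ofReal (B ^ 2)) →
      ∫⁻ y in T2, ENNReal.ofReal (κ y) * ENNReal.ofReal (enorm2 (u y)) * ENNReal.ofReal (P y)
        ≤ ENNReal.ofReal (D + c * S) := by
  -- choose the truncation level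
  have h1 := ((ENNReal.tendsto_nhds_zero.1 (utail_tendsto u hu hL))
    (ENNReal.ofReal (c / (2 * K))) (by simpa using by positivity)).exists
  obtain ⟨M, hM⟩ := h1
  set v : ℝ := ((volume T2) ^ (1 / 2 : ℝ)).toReal with hv
  have hvtop : (volume T2) ^ (1 / 2 : ℝ) ≠ ⊤ :=
    ENNReal.rpow_ne_top_of_nonneg (by norm_num) volume_T2_lt_top.ne
  have hv' : (volume T2) ^ (1 / 2 : ℝ) = ENNReal.ofReal v := (ENNReal.ofReal_toReal hvtop).symm
  have hv0 : 0 ≤ v := ENNReal.toReal_nonneg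
  have hM0 : (0 : ℝ) ≤ M := Nat.cast_nonneg M
  set δ : ℝ := c / (2 * (M * K * v + 1)) with hδ
  have hpos : 0 < M * K * v + 1 := by positivity
  have hδ0 : 0 < δ := by positivity
  have hδ1 : M * K * v * δ ≤ c / 2 := by
    rw [hδ]
    have : M * K * v * (c / (2 * (M * K * v + 1))) = (M * K * v) / (M * K * v + 1) * (c / 2) := by
      field_simp
    rw [this]
    have h2 : (M * K * v) / (M * K * v + 1) ≤ 1 := by
      rw [div_le_one hpos]; linarith
    nlinarith
  refine ⟨M * K * B / δ, by positivity, ?_⟩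
  intro κ P hκm hPm hκ0 hP0 hset S hS hPS hP2
  have hKs := hset
  -- step 1 : split `|u|`
  have s1 : ∫⁻ y in T2, ENNReal.ofReal (κ y) * ENNReal.ofReal (enorm2 (u y)) * ENNReal.ofReal (P y)
      ≤ ENNReal.ofReal S * (∫⁻ y in T2, ENNReal.ofReal (κ y) * ENNReal.ofReal (utail u M y))
        + ENNReal.ofReal M * ∫⁻ y in T2, ENNReal.ofReal (κ y) * ENNReal.ofReal (P y) := by
    have hum := measurable_utail hu M
    rw [← lintegral_const_mul _ (by fun_prop), ← lintegral_const_mul _ (by fun_prop),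
      ← lintegral_add_left (by fun_prop)]
    refine lintegral_mono fun y => ?_
    have hk := hκ0 y
    have hp := hP0 y
    have ht := utail_nonneg u M y
    have hS' := hPS y
    have he := enorm2_le_utail u M y
    have he0 : 0 ≤ enorm2 (u y) := Real.sqrt_nonneg _
    rw [← ENNReal.ofReal_mul hk, ← ENNReal.ofReal_mul (by positivity), ← ENNReal.ofReal_mul hk,
      ← ENNReal.ofReal_mul hS.le, ← ENNReal.ofReal_mul hk, ← ENNReal.ofReal_mul hM0,
      ← ENNReal.ofReal_add (by positivity) (by positivity)]
    apply ENNReal.ofReal_le_ofReal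
    calc κ y * enorm2 (u y) * P y ≤ κ y * (utail u M y + M) * P y := by gcongr
      _ = κ y * utail u M y * P y + M * (κ y * P y) := by ring
      _ ≤ κ y * utail u M y * S + M * (κ y * P y) := by gcongr
      _ = _ := by ring
  have s2 : ∫⁻ y in T2, ENNReal.ofReal (κ y) * ENNReal.ofReal (utail u M y)
      ≤ ENNReal.ofReal K * ENNReal.ofReal (c / (2 * K)) :=
    (layer_cake_le κ _ hκm (measurable_utail hu M) (utail_nonneg u M) _ hset).trans
      (by gcongr)
  -- step 2 : split according to the size of `P`
  set s : ℝ := δ * S with hs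
  have hs0 : 0 < s := by positivity
  set E : Set (Fin 2 → ℝ) := T2 ∩ {y | s < P y} with hE
  have hEm : MeasurableSet E := measurableSet_T2.inter (measurableSet_lt measurable_const hPm)
  have s3 : ∫⁻ y in T2, ENNReal.ofReal (κ y) * ENNReal.ofReal (P y)
      ≤ ENNReal.ofReal S * (∫⁻ y in E, ENNReal.ofReal (κ y))
        + ENNReal.ofReal s * ∫⁻ y in T2, ENNReal.ofReal (κ y) := by
    have hEr : ∫⁻ y in E, ENNReal.ofReal (κ y)
        = ∫⁻ y in T2, ({y | s < P y}).indicator (fun y => ENNReal.ofReal (κ y)) y := by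
      rw [lintegral_indicator (measurableSet_lt measurable_const hPm),
        Measure.restrict_restrict (measurableSet_lt measurable_const hPm), Set.inter_comm]
    have hmi : Measurable (({y | s < P y}).indicator (fun y => ENNReal.ofReal (κ y))) :=
      Measurable.indicator (by fun_prop) (measurableSet_lt measurable_const hPm)
    rw [hEr, ← lintegral_const_mul _ hmi, ← lintegral_const_mul _ (by fun_prop),
      ← lintegral_add_left (by fun_prop)]
    refine lintegral_mono fun y => ?_
    by_cases hy : s < P y
    · simp only
      rw [Set.indicator_of_mem (show y ∈ {y | s < P y} from hy), mul_comm]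
      refine le_trans ?_ le_self_add
      gcongr
      exact hPS y
    · refine le_trans ?_ le_add_self
      rw [mul_comm]
      gcongr
      exact not_lt.1 hy
  have s4 : volume E ^ (1 / 2 : ℝ) ≤ ENNReal.ofReal (B / s) := by
    have h5 : ENNReal.ofReal (s ^ 2) * volume E ≤ ENNReal.ofReal (B ^ 2) := by
      refine le_trans ?_ hP2
      calc ENNReal.ofReal (s ^ 2) * volume E = ∫⁻ y in E, ENNReal.ofReal (s ^ 2) := by
            rw [setLIntegral_const]
        _ ≤ ∫⁻ y in E, ENNReal.ofReal (P y) ^ 2 := by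
            refine setLIntegral_mono' hEm fun y hy => ?_
            rw [ENNReal.ofReal_pow hs0.le]
            gcongr
            exact hy.2.le
        _ ≤ _ := lintegral_mono_set Set.inter_subset_left
    have h6 : volume E ≤ ENNReal.ofReal ((B / s) ^ 2) := by
      rw [div_pow, ENNReal.ofReal_div_of_pos (by positivity)]
      rw [ENNReal.le_div_iff_mul_le (Or.inl (by simpa using by positivity)) (Or.inl (by simp))]
      rwa [mul_comm]
    calc volume E ^ (1 / 2 : ℝ) ≤ ENNReal.ofReal ((B / s) ^ 2) ^ (1 / 2 : ℝ) :=
          ENNReal.rpow_le_rpow h6 (by norm_num)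
      _ = ENNReal.ofReal (B / s) := by
          rw [ENNReal.ofReal_rpow_of_nonneg (by positivity) (by norm_num), ← Real.sqrt_eq_rpow,
            Real.sqrt_sq (by positivity)]
  have s5 : ∫⁻ y in E, ENNReal.ofReal (κ y) ≤ ENNReal.ofReal K * ENNReal.ofReal (B / s) :=
    (hset E Set.inter_subset_left hEm).trans (by gcongr)
  have s6 : ∫⁻ y in T2, ENNReal.ofReal (κ y) ≤ ENNReal.ofReal K * ENNReal.ofReal v := by
    rw [← hv']
    exact hset T2 subset_rfl measurableSet_T2
  calc _ ≤ _ := s1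
    _ ≤ ENNReal.ofReal S * (ENNReal.ofReal K * ENNReal.ofReal (c / (2 * K)))
        + ENNReal.ofReal M * (ENNReal.ofReal S * (ENNReal.ofReal K * ENNReal.ofReal (B / s))
          + ENNReal.ofReal s * (ENNReal.ofReal K * ENNReal.ofReal v)) := by
        gcongr
        exact s3.trans (by gcongr)
    _ = ENNReal.ofReal (S * (K * (c / (2 * K))) + M * (S * (K * (B / s)) + s * (K * v))) := by
        rw [← ENNReal.ofReal_mul hK.le, ← ENNReal.ofReal_mul hK.le, ← ENNReal.ofReal_mul hK.le,
          ← ENNReal.ofReal_mul hS.le, ← ENNReal.ofReal_mul hS.le, ← ENNReal.ofReal_mul hs0.le,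
          ← ENNReal.ofReal_add (by positivity) (by positivity), ← ENNReal.ofReal_mul hM0,
          ← ENNReal.ofReal_add (by positivity) (by positivity)]
    _ ≤ _ := by
        apply ENNReal.ofReal_le_ofReal
        have e1 : S * (K * (c / (2 * K))) = c / 2 * S := by field_simp
        have e2 : S * (K * (B / s)) = K * B / δ := by rw [hs]; field_simp
        rw [e1, e2]
        have e3 : M * (s * (K * v)) ≤ c / 2 * S := by
          have : M * (s * (K * v)) = M * K * v * δ * S := by rw [hs]; ring
          rw [this]
          gcongr
        have e4 : (M : ℝ) * (K * B / δ) = M * K * B / δ := by ring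
        nlinarith


/-! ### Representation of the Galerkin solution -/

/-- Second derivatives of the mollified Galerkin solution. -/
def Hf (N : ℕ) (c : (Fin 2 → ℤ) → ℂ) (a b : Fin 2) (x : Fin 2 → ℝ) : ℂ :=
  ∑ l ∈ Lam N, (((l a : ℝ) * l b * jj N l : ℝ) : ℂ) * c l * ee l x

lemma continuous_Hf (N : ℕ) (c : (Fin 2 → ℤ) → ℂ) (a b : Fin 2) : Continuous (Hf N c a b) := by
  unfold Hf
  exact continuous_finsetSum _ fun l _ => continuous_const.mul (continuous_ee l)

lemma Hf_per (N : ℕ) (c : (Fin 2 → ℤ) → ℂ) (a b : Fin 2) (x : Fin 2 → ℝ) (m : Fin 2 → ℤ) :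
    Hf N c a b (x + fun i => 2 * π * (m i : ℝ)) = Hf N c a b x := by
  unfold Hf
  simp_rw [ee_per]

lemma Hf_bdd (N : ℕ) (c : (Fin 2 → ℤ) → ℂ) (a b : Fin 2) (x : Fin 2 → ℝ) :
    ‖Hf N c a b x‖ ≤ ∑ l ∈ Lam N, ‖(((l a : ℝ) * l b * jj N l : ℝ) : ℂ) * c l‖ := by
  unfold Hf
  refine (norm_sum_le _ _).trans (le_of_eq ?_)
  refine Finset.sum_congr rfl fun l _ => ?_
  rw [norm_mul, norm_ee, mul_one]

lemma integrable_mul_cont {f : (Fin 2 → ℝ) → ℂ} (hf : Integrable f (volume.restrict T2))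
    {g : (Fin 2 → ℝ) → ℂ} (hg : Continuous g) :
    Integrable (fun x => f x * g x) (volume.restrict T2) := by
  obtain ⟨C, hC⟩ := (isCompact_Icc (a := (0 : Fin 2 → ℝ)) (b := fun _ => 2 * π)).exists_bound_of_continuousOn
    hg.continuousOn
  refine hf.mul_bdd (c := C) hg.aestronglyMeasurable ?_
  refine (ae_restrict_iff' measurableSet_T2).2 (Filter.Eventually.of_forall fun x hx => ?_)
  exact hC x (Set.Ico_subset_Icc_self hx)

lemma integral_uH (u : (Fin 2 → ℝ) → (Fin 2 → ℝ))
    (hu1 : ∀ i, Integrable (fun x => u x i) (volume.restrict T2)) (N : ℕ) (c : (Fin 2 → ℤ) → ℂ)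
    (i q : Fin 2) (k : Fin 2 → ℤ) :
    ∫ x in T2, (u x i : ℂ) * Hf N c i q x * ee (-k) x
      = ∑ l ∈ Lam N, (((l i : ℝ) * l q * jj N l : ℝ) : ℂ) * c l * Vc u i (l - k) := by
  have h1 : ∀ x, (u x i : ℂ) * Hf N c i q x * ee (-k) x
      = ∑ l ∈ Lam N, ((((l i : ℝ) * l q * jj N l : ℝ) : ℂ) * c l) * ((u x i : ℂ) * ee (l - k) x) := by
    intro x
    unfold Hf
    rw [Finset.mul_sum, Finset.sum_mul]
    refine Finset.sum_congr rfl fun l _ => ?_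
    rw [sub_eq_add_neg, ee_add]
    ring
  simp_rw [h1]
  rw [integral_finsetSum]
  · simp_rw [integral_const_mul]
    rfl
  · intro l _
    exact (integrable_mul_cont (hu1 i).ofReal (continuous_ee _)).const_mul _

lemma sum_bb (u : (Fin 2 → ℝ) → (Fin 2 → ℝ))
    (hu1 : ∀ i, Integrable (fun x => u x i) (volume.restrict T2)) (N : ℕ) (c : (Fin 2 → ℤ) → ℂ)
    (k : Fin 2 → ℤ) :
    ∑ l ∈ Lam N, (jj N l : ℂ) * c l * bb (Vc u) l k
      = Complex.I * ∑ i, ∑ q, (k q : ℂ) * ∫ x in T2, (u x i : ℂ) * Hf N c i q x * ee (-k) x := by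
  simp_rw [integral_uH u hu1, Fin.sum_univ_two, Finset.mul_sum]
  simp_rw [← Finset.sum_add_distrib]
  rw [Finset.mul_sum]
  refine Finset.sum_congr rfl fun l _ => ?_
  unfold bb
  push_cast
  ring

/-- Exponents of the kernel. -/
def ex (a b q : Fin 2) : Fin 2 → ℕ := fun i =>
  (if a = i then 1 else 0) + (if b = i then 1 else 0) + (if q = i then 1 else 0)

lemma ex_sum (a b q : Fin 2) : ex a b q 0 + ex a b q 1 = 3 := by
  fin_cases a <;> fin_cases b <;> fin_cases q <;> rfl

lemma ex_pow (a b q : Fin 2) (k : Fin 2 → ℤ) :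
    (k 0 : ℝ) ^ ex a b q 0 * (k 1 : ℝ) ^ ex a b q 1 = k a * k b * k q := by
  fin_cases a <;> fin_cases b <;> fin_cases q <;> simp [ex, -mul_eq_mul_right_iff, -mul_eq_mul_left_iff] <;> ring

lemma jj_sq (N : ℕ) (k : Fin 2 → ℤ) : jj N k * jj N k = Real.exp (-nsq k / N) := by
  unfold jj
  rw [← Real.exp_add]
  congr 1
  ring

lemma jj_pos (N : ℕ) (k : Fin 2 → ℤ) : 0 < jj N k := Real.exp_pos _

lemma jj_le_one (N : ℕ) (k : Fin 2 → ℤ) : jj N k ≤ 1 := by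
  unfold jj
  rw [Real.exp_le_one_iff]
  have := nsq_nonneg k
  exact div_nonpos_of_nonpos_of_nonneg (by linarith) (by positivity)

lemma continuous_Ker (a : Fin 2 → ℕ) (N : ℕ) : Continuous (Ker a N) := by
  unfold Ker
  exact continuous_finsetSum _ fun l _ => continuous_const.mul (continuous_ee l)

lemma integrable_uH (u : (Fin 2 → ℝ) → (Fin 2 → ℝ))
    (hu1 : ∀ i, Integrable (fun x => u x i) (volume.restrict T2)) (N : ℕ) (c : (Fin 2 → ℤ) → ℂ)
    (i a b : Fin 2) : Integrable (fun x => (u x i : ℂ) * Hf N c a b x) (volume.restrict T2) :=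
  integrable_mul_cont (hu1 i).ofReal (continuous_Hf N c a b)

lemma Ker_conv (u : (Fin 2 → ℝ) → (Fin 2 → ℝ))
    (hu1 : ∀ i, Integrable (fun x => u x i) (volume.restrict T2)) (N : ℕ) (c : (Fin 2 → ℤ) → ℂ)
    (a b i q : Fin 2) (x : Fin 2 → ℝ) :
    ∫ y in T2, Ker (ex a b q) N (x - y) * ((u y i : ℂ) * Hf N c i q y)
      = ∑ k ∈ Lam N, (((k a : ℝ) * k b * k q * (jj N k * jj N k) / nsq k ^ 2 : ℝ) : ℂ) * ee k x
          * ∫ y in T2, (u y i : ℂ) * Hf N c i q y * ee (-k) y := by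
  have h1 : ∀ y, Ker (ex a b q) N (x - y) * ((u y i : ℂ) * Hf N c i q y)
      = ∑ k ∈ Lam N, ((((k a : ℝ) * k b * k q * (jj N k * jj N k) / nsq k ^ 2 : ℝ) : ℂ) * ee k x)
          * ((u y i : ℂ) * Hf N c i q y * ee (-k) y) := by
    intro y
    unfold Ker Lam
    rw [Finset.sum_erase, Finset.sum_mul]
    · refine Finset.sum_congr rfl fun k _ => ?_
      rw [ex_pow, jj_sq, ee_sub]
      ring
    · simp
  simp_rw [h1]
  rw [integral_finsetSum]
  · simp_rw [integral_const_mul]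
  · intro k _
    exact (integrable_mul_cont (integrable_uH u hu1 N c i i q) (continuous_ee _)).const_mul _

/-- The Galerkin equation. -/
def IsGal (u : (Fin 2 → ℝ) → (Fin 2 → ℝ)) (N : ℕ) (k₀ : Fin 2 → ℤ) (c : (Fin 2 → ℤ) → ℂ) : Prop :=
  (∀ k ∈ Lam N, ((nsq k ^ 2 : ℝ) : ℂ) * c k
    - (1 / (2 * π) ^ 2 * jj N k : ℝ) * ∑ l ∈ Lam N, (jj N l : ℂ) * c l * bb (Vc u) l k
      = if k = k₀ then 1 else 0) ∧
  ∑ k ∈ Lam N, nsq k ^ 2 * ‖c k‖ ^ 2 ≤ 1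

lemma H_rep (u : (Fin 2 → ℝ) → (Fin 2 → ℝ))
    (hu1 : ∀ i, Integrable (fun x => u x i) (volume.restrict T2)) (N : ℕ) (k₀ : Fin 2 → ℤ)
    (c : (Fin 2 → ℤ) → ℂ) (hc : IsGal u N k₀ c) (a b : Fin 2) (x : Fin 2 → ℝ) :
    Hf N c a b x = (∑ k ∈ Lam N, if k = k₀ then
        (((k a : ℝ) * k b * jj N k / nsq k ^ 2 : ℝ) : ℂ) * ee k x else 0)
      + ((1 / (2 * π) ^ 2 : ℝ) : ℂ) * Complex.I * ∑ i, ∑ q,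
        ∫ y in T2, Ker (ex a b q) N (x - y) * ((u y i : ℂ) * Hf N c i q y) := by
  simp_rw [Ker_conv u hu1, Fin.sum_univ_two]
  simp_rw [← Finset.sum_add_distrib]
  rw [Finset.mul_sum, ← Finset.sum_add_distrib]
  conv_lhs => unfold Hf
  refine Finset.sum_congr rfl fun k hk => ?_
  have h1 := hc.1 k hk
  rw [sum_bb u hu1] at h1
  simp_rw [Fin.sum_univ_two] at h1
  have hn : (nsq k : ℝ) ≠ 0 := by
    have := one_le_nsq' (Finset.ne_of_mem_erase hk)
    linarith
  have hn' : ((nsq k : ℝ) : ℂ) ≠ 0 := by exact_mod_cast hn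
  have h2 : c k = ((if k = k₀ then (1 : ℂ) else 0)
    + (1 / (2 * π) ^ 2 * jj N k : ℝ) * (Complex.I *
      ((k 0 : ℂ) * (∫ x in T2, (u x 0 : ℂ) * Hf N c 0 0 x * ee (-k) x)
      + (k 1 : ℂ) * (∫ x in T2, (u x 0 : ℂ) * Hf N c 0 1 x * ee (-k) x)
      + ((k 0 : ℂ) * (∫ x in T2, (u x 1 : ℂ) * Hf N c 1 0 x * ee (-k) x)
      + (k 1 : ℂ) * (∫ x in T2, (u x 1 : ℂ) * Hf N c 1 1 x * ee (-k) x))))) / (nsq k : ℂ) ^ 2 := by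
    rw [eq_div_iff (pow_ne_zero 2 hn'), ← h1]
    push_cast
    ring
  rw [h2]
  split_ifs
  · push_cast
    field_simp
  · push_cast
    field_simp
    ring

/-! ### A priori bound -/

lemma exists_shift (x : Fin 2 → ℝ) : ∃ m : Fin 2 → ℤ, (x + fun i => 2 * π * (m i : ℝ)) ∈ T2 := by
  have hp : (0 : ℝ) < 2 * π := by positivity
  refine ⟨fun i => -⌊x i / (2 * π)⌋, ?_⟩
  have h1 : ∀ i, 0 ≤ x i + 2 * π * ((-⌊x i / (2 * π)⌋ : ℤ) : ℝ) := by
    intro i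
    have := Int.floor_le (x i / (2 * π))
    rw [le_div_iff₀ hp] at this
    push_cast
    linarith
  have h2 : ∀ i, x i + 2 * π * ((-⌊x i / (2 * π)⌋ : ℤ) : ℝ) < 2 * π := by
    intro i
    have := Int.lt_floor_add_one (x i / (2 * π))
    rw [div_lt_iff₀ hp] at this
    push_cast
    linarith
  refine ⟨fun i => h1 i, fun i => (h2 i).le, fun h => ?_⟩
  have h3 := h 0
  have h4 := h2 0
  simp only [Pi.add_apply] at h3
  linarith

/-- Sum of the sizes of the second derivatives. -/
def Ps (N : ℕ) (c : (Fin 2 → ℤ) → ℂ) (x : Fin 2 → ℝ) : ℝ := ∑ a, ∑ b, ‖Hf N c a b x‖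

lemma Ps_nonneg (N : ℕ) (c : (Fin 2 → ℤ) → ℂ) (x : Fin 2 → ℝ) : 0 ≤ Ps N c x :=
  Finset.sum_nonneg fun _ _ => Finset.sum_nonneg fun _ _ => norm_nonneg _

lemma Hf_le_Ps (N : ℕ) (c : (Fin 2 → ℤ) → ℂ) (a b : Fin 2) (x : Fin 2 → ℝ) :
    ‖Hf N c a b x‖ ≤ Ps N c x := by
  unfold Ps
  refine le_trans ?_ (Finset.single_le_sum (f := fun a => ∑ b, ‖Hf N c a b x‖)
    (fun _ _ => Finset.sum_nonneg fun _ _ => norm_nonneg _) (Finset.mem_univ a))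
  exact Finset.single_le_sum (f := fun b => ‖Hf N c a b x‖)
    (fun _ _ => norm_nonneg _) (Finset.mem_univ b)

lemma continuous_Ps (N : ℕ) (c : (Fin 2 → ℤ) → ℂ) : Continuous (Ps N c) := by
  unfold Ps
  exact continuous_finsetSum _ fun a _ => continuous_finsetSum _ fun b _ => (continuous_Hf N c a b).norm

lemma abs_mul_le_nsq (k : Fin 2 → ℤ) (a b : Fin 2) : |(k a : ℝ) * k b| ≤ nsq k := by
  unfold nsq
  rw [abs_le]
  fin_cases a <;> fin_cases b <;> constructor <;> dsimp only [Fin.zero_eta, Fin.mk_one] <;>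
    nlinarith [sq_nonneg ((k 0 : ℝ) + k 1), sq_nonneg ((k 0 : ℝ) - k 1), sq_nonneg (k 0 : ℝ),
      sq_nonneg (k 1 : ℝ)]

lemma Hf_L2 (N : ℕ) (c : (Fin 2 → ℤ) → ℂ) (hc : ∑ k ∈ Lam N, nsq k ^ 2 * ‖c k‖ ^ 2 ≤ 1)
    (a b : Fin 2) : ∫ x in T2, ‖Hf N c a b x‖ ^ 2 ≤ (2 * π) ^ 2 := by
  unfold Hf
  rw [parseval_fin (Lam N) (fun l => (((l a : ℝ) * l b * jj N l : ℝ) : ℂ) * c l)]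
  refine mul_le_of_le_one_right (by positivity) (le_trans (Finset.sum_le_sum fun l _ => ?_) hc)
  rw [norm_mul, mul_pow]
  refine mul_le_mul_of_nonneg_right ?_ (by positivity)
  rw [Complex.norm_real, Real.norm_eq_abs, abs_mul]
  refine pow_le_pow_left₀ (by positivity) ?_ 2
  calc |(l a : ℝ) * l b| * |jj N l| ≤ nsq l * 1 := by
        refine mul_le_mul (abs_mul_le_nsq l a b) ?_ (abs_nonneg _) (nsq_nonneg _)
        rw [abs_of_pos (jj_pos N l)]
        exact jj_le_one N l
    _ = nsq l := mul_one _

lemma integrable_T2_real {f : (Fin 2 → ℝ) → ℝ} (hf : Continuous f) :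
    Integrable f (volume.restrict T2) := by
  have h : IntegrableOn f (Set.Icc 0 (fun _ => 2 * π)) volume :=
    hf.continuousOn.integrableOn_compact isCompact_Icc
  exact h.mono_set Set.Ico_subset_Icc_self

lemma Ps_L2 (N : ℕ) (c : (Fin 2 → ℤ) → ℂ) (hc : ∑ k ∈ Lam N, nsq k ^ 2 * ‖c k‖ ^ 2 ≤ 1) :
    ∫⁻ y in T2, ENNReal.ofReal (Ps N c y) ^ 2 ≤ ENNReal.ofReal ((4 * (2 * π)) ^ 2) := by
  have hInt : ∀ a b, Integrable (fun x => ‖Hf N c a b x‖ ^ 2) (volume.restrict T2) := fun a b =>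
    integrable_T2_real ((continuous_Hf N c a b).norm.pow 2)
  have h1 : ∫ y in T2, Ps N c y ^ 2 ≤ (4 * (2 * π)) ^ 2 := by
    calc ∫ y in T2, Ps N c y ^ 2
        ≤ ∫ y in T2, 4 * (‖Hf N c 0 0 y‖ ^ 2 + ‖Hf N c 0 1 y‖ ^ 2 + (‖Hf N c 1 0 y‖ ^ 2 + ‖Hf N c 1 1 y‖ ^ 2)) := by
          refine integral_mono (integrable_T2_real ((continuous_Ps N c).pow 2))
            ((((hInt 0 0).add (hInt 0 1)).add ((hInt 1 0).add (hInt 1 1))).const_mul 4) fun y => ?_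
          simp only [Ps, Fin.sum_univ_two]
          generalize ‖Hf N c 0 0 y‖ = p
          generalize ‖Hf N c 0 1 y‖ = q
          generalize ‖Hf N c 1 0 y‖ = r
          generalize ‖Hf N c 1 1 y‖ = s
          nlinarith [sq_nonneg (p - q), sq_nonneg (p - r), sq_nonneg (p - s), sq_nonneg (q - r),
            sq_nonneg (q - s), sq_nonneg (r - s)]
      _ = 4 * ((∫ y in T2, ‖Hf N c 0 0 y‖ ^ 2) + (∫ y in T2, ‖Hf N c 0 1 y‖ ^ 2)
            + ((∫ y in T2, ‖Hf N c 1 0 y‖ ^ 2) + (∫ y in T2, ‖Hf N c 1 1 y‖ ^ 2))) := by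
          rw [integral_const_mul, integral_add ((hInt 0 0).fun_add (hInt 0 1)) ((hInt 1 0).fun_add (hInt 1 1)),
            integral_add (hInt 0 0) (hInt 0 1), integral_add (hInt 1 0) (hInt 1 1)]
      _ ≤ (4 * (2 * π)) ^ 2 := by
          have h00 := Hf_L2 N c hc 0 0
          have h01 := Hf_L2 N c hc 0 1
          have h10 := Hf_L2 N c hc 1 0
          have h11 := Hf_L2 N c hc 1 1
          nlinarith
  have h2 : ∀ y, ENNReal.ofReal (Ps N c y) ^ 2 = ENNReal.ofReal (Ps N c y ^ 2) := fun y =>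
    (ENNReal.ofReal_pow (Ps_nonneg N c y) 2).symm
  simp_rw [h2]
  rw [← ofReal_integral_eq_lintegral_ofReal (f := fun y => Ps N c y ^ 2)
    (integrable_T2_real ((continuous_Ps N c).pow 2))
    (Filter.Eventually.of_forall fun y => by positivity)]
  exact ENNReal.ofReal_le_ofReal h1

lemma abs_le_enorm2 (v : Fin 2 → ℝ) (i : Fin 2) : |v i| ≤ enorm2 v := by
  unfold enorm2
  refine Real.abs_le_sqrt ?_
  fin_cases i <;> simp <;> positivity

lemma first_term (N : ℕ) (k₀ : Fin 2 → ℤ) (a b : Fin 2) (x : Fin 2 → ℝ) :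
    ‖∑ k ∈ Lam N, if k = k₀ then (((k a : ℝ) * k b * jj N k / nsq k ^ 2 : ℝ) : ℂ) * ee k x else 0‖ ≤ 1 := by
  rw [Finset.sum_ite_eq' (Lam N) k₀]
  split_ifs with h
  · rw [norm_mul, norm_ee, mul_one, Complex.norm_real, Real.norm_eq_abs, abs_div, abs_mul]
    have h1 := one_le_nsq' (Finset.ne_of_mem_erase h)
    have h2 := abs_mul_le_nsq k₀ a b
    rw [abs_of_pos (jj_pos N k₀), abs_of_pos (by positivity : (0 : ℝ) < nsq k₀ ^ 2),
      div_le_one (by positivity)]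
    have h3 := jj_le_one N k₀
    have h4 := jj_pos N k₀
    calc |(k₀ a : ℝ) * k₀ b| * jj N k₀ ≤ nsq k₀ * 1 := mul_le_mul h2 h3 h4.le (by linarith)
      _ ≤ nsq k₀ ^ 2 := by nlinarith
  · simp

lemma apriori (u : (Fin 2 → ℝ) → (Fin 2 → ℝ)) (hu : Measurable u) (hL : L21 u < ⊤)
    (hu1 : ∀ i, Integrable (fun x => u x i) (volume.restrict T2)) :
    ∃ S : ℝ, 0 ≤ S ∧ ∀ N : ℕ, 1 ≤ N → ∀ k₀ c, IsGal u N k₀ c → ∀ a b x, ‖Hf N c a b x‖ ≤ S := by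
  choose Cf hC0 hCf using fun t : Fin 2 × Fin 2 × Fin 2 => Ker_bound (ex t.1 t.2.1 t.2.2) (ex_sum _ _ _)
  obtain ⟨C, hC, hset⟩ := kernel_set_bound
  set D0 : ℝ := ∑ t, Cf t + 1 with hD0
  have hsum : 0 ≤ ∑ t, Cf t := Finset.sum_nonneg fun t _ => hC0 t
  have hD0p : 0 < D0 := by linarith
  obtain ⟨D, hD, hcore⟩ := apriori_core u hu hL (C * D0) (4 * (2 * π)) ((2 * π) ^ 2 / 32) (by positivity)
    (by positivity) (by positivity)
  set α : ℝ := 1 / (2 * π) ^ 2 with hα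
  have hαp : 0 < α := by positivity
  refine ⟨2 * (4 + 16 * α * D) + 1, by positivity, fun N hN k₀ c hc => ?_⟩
  have hbdd : BddAbove (Set.range (Ps N c)) := by
    refine ⟨∑ a : Fin 2, ∑ b : Fin 2, ∑ l ∈ Lam N, ‖(((l a : ℝ) * l b * jj N l : ℝ) : ℂ) * c l‖, ?_⟩
    rintro _ ⟨x, rfl⟩
    exact Finset.sum_le_sum fun a _ => Finset.sum_le_sum fun b _ => Hf_bdd N c a b x
  set S := ⨆ x, Ps N c x with hS
  have hPS : ∀ x, Ps N c x ≤ S := fun x => le_ciSup hbdd x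
  have hS0 : 0 ≤ S := (Ps_nonneg N c 0).trans (hPS 0)
  have hterm : ∀ x ∈ T2, ∀ a b i q : Fin 2,
      ‖∫ y in T2, Ker (ex a b q) N (x - y) * ((u y i : ℂ) * Hf N c i q y)‖
        ≤ D + (2 * π) ^ 2 / 32 * (S + 1) := by
    intro x hx a b i q
    have hle := hcore (fun y => ‖Ker (ex a b q) N (x - y)‖) (Ps N c)
      (((continuous_Ker (ex a b q) N).comp (continuous_const.sub continuous_id)).norm.measurable)
      (continuous_Ps N c).measurable (fun y => norm_nonneg _) (Ps_nonneg N c)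
      (hset D0 hD0p x hx _ (fun y => norm_nonneg _) (fun y => by
        refine (hCf (a, b, q) N hN (x - y)).trans ?_
        have := Finset.single_le_sum (f := Cf) (fun t _ => hC0 t) (Finset.mem_univ (a, b, q))
        linarith)) (S + 1) (by linarith) (fun y => by linarith [hPS y]) (Ps_L2 N c hc.2)
    have h1 : ‖∫ y in T2, Ker (ex a b q) N (x - y) * ((u y i : ℂ) * Hf N c i q y)‖ₑ
        ≤ ENNReal.ofReal (D + (2 * π) ^ 2 / 32 * (S + 1)) := by
      refine (enorm_integral_le_lintegral_enorm _).trans (le_trans (lintegral_mono fun y => ?_) hle)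
      rw [enorm_mul, enorm_mul, mul_assoc]
      refine mul_le_mul' (by rw [ofReal_norm]) (mul_le_mul' ?_ ?_)
      · rw [← ofReal_norm]
        refine ENNReal.ofReal_le_ofReal ?_
        rw [Complex.norm_real]
        exact abs_le_enorm2 (u y) i
      · rw [← ofReal_norm]
        exact ENNReal.ofReal_le_ofReal (Hf_le_Ps N c i q y)
    rw [← ofReal_norm] at h1
    exact (ENNReal.ofReal_le_ofReal_iff (by positivity)).1 h1
  have hH : ∀ x ∈ T2, ∀ a b, ‖Hf N c a b x‖ ≤ 1 + α * (4 * (D + (2 * π) ^ 2 / 32 * (S + 1))) := by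
    intro x hx a b
    rw [H_rep u hu1 N k₀ c hc a b x]
    refine (norm_add_le _ _).trans (add_le_add (first_term N k₀ a b x) ?_)
    rw [norm_mul, norm_mul, Complex.norm_I, mul_one, Complex.norm_real, Real.norm_eq_abs,
      abs_of_pos hαp]
    refine mul_le_mul_of_nonneg_left ?_ hαp.le
    simp only [Fin.sum_univ_two]
    have h00 := hterm x hx a b 0 0
    have h01 := hterm x hx a b 0 1
    have h10 := hterm x hx a b 1 0
    have h11 := hterm x hx a b 1 1
    refine (norm_add_le _ _).trans ?_
    refine (add_le_add (norm_add_le _ _) (norm_add_le _ _)).trans ?_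
    linarith
  have hP : ∀ x ∈ T2, Ps N c x ≤ 4 + 16 * α * D + (S + 1) / 2 := by
    intro x hx
    have h00 := hH x hx 0 0
    have h01 := hH x hx 0 1
    have h10 := hH x hx 1 0
    have h11 := hH x hx 1 1
    have e : α * (2 * π) ^ 2 = 1 := by
      rw [hα]
      field_simp
    have e2 : 4 * (1 + α * (4 * (D + (2 * π) ^ 2 / 32 * (S + 1)))) = 4 + 16 * α * D + (S + 1) / 2 := by
      linear_combination (S + 1) / 2 * e
    rw [← e2]
    simp only [Ps, Fin.sum_univ_two]
    linarith
  have hPall : ∀ x, Ps N c x ≤ 4 + 16 * α * D + (S + 1) / 2 := by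
    intro x
    obtain ⟨m, hm⟩ := exists_shift x
    have := hP _ hm
    simpa only [Ps, Hf_per] using this
  have hSle : S ≤ 4 + 16 * α * D + (S + 1) / 2 := ciSup_le hPall
  intro a b x
  have h1 := Hf_le_Ps N c a b x
  have h2 := hPS x
  linarith

/-! ### Conclusion -/

/-- The rotated velocity field. -/
def tu (u : (Fin 2 → ℝ) → (Fin 2 → ℝ)) (j : Fin 2) (x : Fin 2 → ℝ) : ℝ :=
  if j = 0 then u x 1 else -u x 0

/-- Fourier coefficients of the vorticity, up to normalization. -/
def om (u : (Fin 2 → ℝ) → (Fin 2 → ℝ)) (k : Fin 2 → ℤ) : ℂ :=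
  (k 0 : ℂ) * Vc u 1 k - (k 1 : ℂ) * Vc u 0 k

lemma nsq_neg' (k : Fin 2 → ℤ) : nsq (-k) = nsq k := by
  simp [nsq]

lemma jj_neg' (N : ℕ) (k : Fin 2 → ℤ) : jj N (-k) = jj N k := by
  simp [jj, nsq_neg']

lemma neg_mem_Lam (N : ℕ) (k : Fin 2 → ℤ) : k ∈ Lam N ↔ -k ∈ Lam N := by
  simp only [Lam, box, Finset.mem_erase, Fintype.mem_piFinset, Finset.mem_Icc, Pi.neg_apply]
  refine and_congr (by simp) (forall_congr' fun i => ?_)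
  constructor <;> rintro ⟨h1, h2⟩ <;> constructor <;> linarith

lemma fc_tu_zero (u : (Fin 2 → ℝ) → (Fin 2 → ℝ)) (k : Fin 2 → ℤ) :
    fc (fun x => (tu u 0 x : ℂ)) (-k) = ((1 / (2 * π) ^ 2 : ℝ) : ℂ) * Vc u 1 k := by
  simp only [fc, Vc, neg_neg, tu, if_true]
  simp_rw [mul_comm (ee k _)]

lemma fc_tu_one (u : (Fin 2 → ℝ) → (Fin 2 → ℝ)) (k : Fin 2 → ℤ) :
    fc (fun x => (tu u 1 x : ℂ)) (-k) = -(((1 / (2 * π) ^ 2 : ℝ) : ℂ) * Vc u 0 k) := by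
  simp only [fc, Vc, neg_neg, tu, one_ne_zero, if_false]
  rw [← mul_neg, ← integral_neg]
  congr 2
  ext x
  push_cast
  ring

lemma fc_tu (u : (Fin 2 → ℝ) → (Fin 2 → ℝ)) (k : Fin 2 → ℤ) (hk : k ≠ 0)
    (hd : (k 0 : ℂ) * Vc u 0 k + (k 1 : ℂ) * Vc u 1 k = 0) (j : Fin 2) :
    fc (fun x => (tu u j x : ℂ)) (-k)
      = ((1 / (2 * π) ^ 2 : ℝ) : ℂ) * (om u k * (k j : ℂ) / (nsq k : ℂ)) := by
  have hn : (nsq k : ℂ) ≠ 0 := by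
    have := one_le_nsq' hk
    exact_mod_cast (by linarith : nsq k ≠ 0)
  have hn2 : (nsq k : ℂ) = (k 0 : ℂ) ^ 2 + (k 1 : ℂ) ^ 2 := by
    simp [nsq]
  have h0 : Vc u 1 k = om u k * (k 0 : ℂ) / (nsq k : ℂ) := by
    rw [eq_div_iff hn, hn2, om]
    linear_combination (k 1 : ℂ) * hd
  have h1 : -Vc u 0 k = om u k * (k 1 : ℂ) / (nsq k : ℂ) := by
    rw [eq_div_iff hn, hn2, om]
    linear_combination -(k 0 : ℂ) * hd
  fin_cases j
  · exact (fc_tu_zero u k).trans (by rw [h0]; rfl)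
  · refine (fc_tu_one u k).trans ?_
    rw [← mul_neg, h1]
    rfl

/-- Mollified rotated velocity. -/
def Wf (u : (Fin 2 → ℝ) → (Fin 2 → ℝ)) (N : ℕ) (j : Fin 2) (x : Fin 2 → ℝ) : ℂ :=
  ∑ k ∈ box N, ((jj N k * jj N k : ℝ) : ℂ) * fc (fun x => (tu u j x : ℂ)) k * ee k x

lemma continuous_Wf (u : (Fin 2 → ℝ) → (Fin 2 → ℝ)) (N : ℕ) (j : Fin 2) :
    Continuous (Wf u N j) := by
  unfold Wf
  exact continuous_finsetSum _ fun l _ => continuous_const.mul (continuous_ee l)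

lemma Wf_eq (u : (Fin 2 → ℝ) → (Fin 2 → ℝ)) (N : ℕ)
    (hd : ∀ k : Fin 2 → ℤ, (k 0 : ℂ) * Vc u 0 k + (k 1 : ℂ) * Vc u 1 k = 0)
    (h0 : ∀ i, Vc u i 0 = 0) (j : Fin 2) (x : Fin 2 → ℝ) :
    Wf u N j x = ∑ k ∈ Lam N, ((jj N k * jj N k : ℝ) : ℂ)
      * (((1 / (2 * π) ^ 2 : ℝ) : ℂ) * (om u k * (k j : ℂ) / (nsq k : ℂ))) * ee (-k) x := by
  have hz : fc (fun x => (tu u j x : ℂ)) 0 = 0 := by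
    rw [← neg_zero]
    fin_cases j
    · exact (fc_tu_zero u 0).trans (by rw [h0, mul_zero])
    · exact (fc_tu_one u 0).trans (by rw [h0, mul_zero, neg_zero])
  have h1 : Wf u N j x
      = ∑ k ∈ Lam N, ((jj N k * jj N k : ℝ) : ℂ) * fc (fun x => (tu u j x : ℂ)) k * ee k x := by
    unfold Wf Lam
    rw [Finset.sum_erase]
    rw [hz, mul_zero, zero_mul]
  rw [h1]
  refine (Finset.sum_equiv (Equiv.neg _) (fun k => neg_mem_Lam N k) fun k hk => ?_).symm
  simp only [Equiv.neg_apply]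
  rw [jj_neg', fc_tu u k (Finset.ne_of_mem_erase hk) (hd k)]

lemma integral_W (u : (Fin 2 → ℝ) → (Fin 2 → ℝ))
    (hu1 : ∀ i, Integrable (fun x => u x i) (volume.restrict T2)) (N : ℕ)
    (hd : ∀ k : Fin 2 → ℤ, (k 0 : ℂ) * Vc u 0 k + (k 1 : ℂ) * Vc u 1 k = 0)
    (h0 : ∀ i, Vc u i 0 = 0) (c : (Fin 2 → ℤ) → ℂ) (i j : Fin 2) :
    ∫ x in T2, (u x i : ℂ) * Hf N c i j x * Wf u N j x
      = ∑ k ∈ Lam N, (((jj N k * jj N k : ℝ) : ℂ)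
      * (((1 / (2 * π) ^ 2 : ℝ) : ℂ) * (om u k * (k j : ℂ) / (nsq k : ℂ))))
        * ∫ x in T2, (u x i : ℂ) * Hf N c i j x * ee (-k) x := by
  have h1 : ∀ x, (u x i : ℂ) * Hf N c i j x * Wf u N j x
      = ∑ k ∈ Lam N, (((jj N k * jj N k : ℝ) : ℂ)
      * (((1 / (2 * π) ^ 2 : ℝ) : ℂ) * (om u k * (k j : ℂ) / (nsq k : ℂ))))
        * ((u x i : ℂ) * Hf N c i j x * ee (-k) x) := by
    intro x
    rw [Wf_eq u N hd h0, Finset.mul_sum]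
    refine Finset.sum_congr rfl fun k _ => ?_
    ring
  simp_rw [h1]
  rw [integral_finsetSum]
  · simp_rw [integral_const_mul]
  · intro k _
    exact (integrable_mul_cont (integrable_uH u hu1 N c i i j) (continuous_ee _)).const_mul _

lemma sum_W (u : (Fin 2 → ℝ) → (Fin 2 → ℝ))
    (hu1 : ∀ i, Integrable (fun x => u x i) (volume.restrict T2)) (N : ℕ)
    (hd : ∀ k : Fin 2 → ℤ, (k 0 : ℂ) * Vc u 0 k + (k 1 : ℂ) * Vc u 1 k = 0)
    (h0 : ∀ i, Vc u i 0 = 0) (k₀ : Fin 2 → ℤ) (c : (Fin 2 → ℤ) → ℂ) (hc : IsGal u N k₀ c)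
    (hk₀ : k₀ ∈ Lam N) :
    Complex.I * ∑ i, ∑ j, ∫ x in T2, (u x i : ℂ) * Hf N c i j x * Wf u N j x
      = (∑ k ∈ Lam N, (jj N k : ℂ) * nsq k * om u k * c k) - (jj N k₀ : ℂ) * om u k₀ / nsq k₀ := by
  have h2 : (jj N k₀ : ℂ) * om u k₀ / nsq k₀
      = ∑ k ∈ Lam N, (jj N k : ℂ) * om u k / nsq k * (if k = k₀ then 1 else 0) := by
    simp [hk₀]
  rw [h2, ← Finset.sum_sub_distrib]
  simp_rw [integral_W u hu1 N hd h0 c, Fin.sum_univ_two, ← Finset.sum_add_distrib]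
  rw [Finset.mul_sum]
  refine Finset.sum_congr rfl fun k hk => ?_
  have h1 := hc.1 k hk
  rw [sum_bb u hu1] at h1
  simp_rw [Fin.sum_univ_two] at h1
  rw [← h1]
  have hn : (nsq k : ℂ) ≠ 0 := by
    have := one_le_nsq' (Finset.ne_of_mem_erase hk)
    exact_mod_cast (by linarith : nsq k ≠ 0)
  push_cast
  field_simp
  ring

lemma integral_tuH (u : (Fin 2 → ℝ) → (Fin 2 → ℝ))
    (hu2 : ∀ i j, Integrable (fun x => u x i * u x j) (volume.restrict T2)) (N : ℕ)
    (c : (Fin 2 → ℤ) → ℂ) (i j : Fin 2) :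
    ∫ x in T2, (u x i : ℂ) * Hf N c i j x * (tu u j x : ℂ)
      = ∑ l ∈ Lam N, (((l i : ℝ) * l j * jj N l : ℝ) : ℂ) * c l
        * (if j = 0 then Qc u i 1 l else - Qc u i 0 l) := by
  have hInt : Integrable (fun x => ((u x i * tu u j x : ℝ) : ℂ)) (volume.restrict T2) := by
    refine Integrable.ofReal ?_
    unfold tu
    split_ifs
    · exact hu2 i 1
    · exact (hu2 i 0).fun_neg.congr (Filter.Eventually.of_forall fun x => (mul_neg _ _).symm)
  have h1 : ∀ x, (u x i : ℂ) * Hf N c i j x * (tu u j x : ℂ)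
      = ∑ l ∈ Lam N, ((((l i : ℝ) * l j * jj N l : ℝ) : ℂ) * c l)
        * (((u x i * tu u j x : ℝ) : ℂ) * ee l x) := by
    intro x
    unfold Hf
    rw [Finset.mul_sum, Finset.sum_mul]
    refine Finset.sum_congr rfl fun l _ => ?_
    push_cast
    ring
  simp_rw [h1]
  rw [integral_finsetSum]
  · simp_rw [integral_const_mul]
    refine Finset.sum_congr rfl fun l _ => ?_
    congr 1
    unfold tu Qc
    split_ifs
    · rfl
    · rw [← integral_neg]
      congr 1
      ext x
      push_cast
      ring
  · intro l _
    exact (integrable_mul_cont hInt (continuous_ee _)).const_mul _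

lemma sum_tu (u : (Fin 2 → ℝ) → (Fin 2 → ℝ))
    (hu2 : ∀ i j, Integrable (fun x => u x i * u x j) (volume.restrict T2)) (N : ℕ)
    (hNS : ∀ k p : Fin 2 → ℤ, p 0 * k 0 + p 1 * k 1 = 0 →
      -(nsq k : ℂ) * ∑ j, (p j : ℂ) * Vc u j k
        + Complex.I * ∑ i, ∑ j, (k i : ℂ) * (p j : ℂ) * Qc u i j k = 0)
    (c : (Fin 2 → ℤ) → ℂ) :
    Complex.I * ∑ i, ∑ j, ∫ x in T2, (u x i : ℂ) * Hf N c i j x * (tu u j x : ℂ)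
      = ∑ k ∈ Lam N, (jj N k : ℂ) * nsq k * om u k * c k := by
  simp_rw [integral_tuH u hu2 N c, Fin.sum_univ_two, ← Finset.sum_add_distrib]
  rw [Finset.mul_sum]
  refine Finset.sum_congr rfl fun k _ => ?_
  have h := hNS k ![-k 1, k 0] (by simp; ring)
  simp [Fin.sum_univ_two] at h
  simp only [one_ne_zero, if_false, if_true, om]
  push_cast
  linear_combination ((jj N k : ℂ) * c k) * h

lemma key_identity (u : (Fin 2 → ℝ) → (Fin 2 → ℝ))
    (hu1 : ∀ i, Integrable (fun x => u x i) (volume.restrict T2))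
    (hu2 : ∀ i j, Integrable (fun x => u x i * u x j) (volume.restrict T2)) (N : ℕ)
    (hd : ∀ k : Fin 2 → ℤ, (k 0 : ℂ) * Vc u 0 k + (k 1 : ℂ) * Vc u 1 k = 0)
    (hNS : ∀ k p : Fin 2 → ℤ, p 0 * k 0 + p 1 * k 1 = 0 →
      -(nsq k : ℂ) * ∑ j, (p j : ℂ) * Vc u j k
        + Complex.I * ∑ i, ∑ j, (k i : ℂ) * (p j : ℂ) * Qc u i j k = 0)
    (h0 : ∀ i, Vc u i 0 = 0) (k₀ : Fin 2 → ℤ) (c : (Fin 2 → ℤ) → ℂ) (hc : IsGal u N k₀ c)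
    (hk₀ : k₀ ∈ Lam N) :
    (jj N k₀ : ℂ) * om u k₀ / nsq k₀
      = Complex.I * ∑ i, ∑ j, ∫ x in T2, (u x i : ℂ) * Hf N c i j x * ((tu u j x : ℂ) - Wf u N j x) := by
  have hInt : ∀ i j, Integrable (fun x => (u x i : ℂ) * Hf N c i j x * (tu u j x : ℂ))
      (volume.restrict T2) := by
    intro i j
    have h1 : Integrable (fun x => ((u x i * tu u j x : ℝ) : ℂ)) (volume.restrict T2) := by
      refine Integrable.ofReal ?_
      unfold tu
      split_ifs
      · exact hu2 i 1
      · exact (hu2 i 0).fun_neg.congr (Filter.Eventually.of_forall fun x => (mul_neg _ _).symm)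
    refine (integrable_mul_cont h1 (continuous_Hf N c i j)).congr
      (Filter.Eventually.of_forall fun x => ?_)
    push_cast
    ring
  have hInt2 : ∀ i j, Integrable (fun x => (u x i : ℂ) * Hf N c i j x * Wf u N j x)
      (volume.restrict T2) := fun i j =>
    integrable_mul_cont (integrable_uH u hu1 N c i i j) (continuous_Wf u N j)
  have h3 : ∀ i j, ∫ x in T2, (u x i : ℂ) * Hf N c i j x * ((tu u j x : ℂ) - Wf u N j x)
      = (∫ x in T2, (u x i : ℂ) * Hf N c i j x * (tu u j x : ℂ))
        - ∫ x in T2, (u x i : ℂ) * Hf N c i j x * Wf u N j x := by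
    intro i j
    rw [← integral_sub (hInt i j) (hInt2 i j)]
    simp_rw [mul_sub]
  simp_rw [h3, Finset.sum_sub_distrib]
  rw [mul_sub, sum_tu u hu2 N hNS c, sum_W u hu1 N hd h0 k₀ c hc hk₀]
  ring

lemma jj_tendsto (k : Fin 2 → ℤ) :
    Filter.Tendsto (fun N => jj N k) Filter.atTop (nhds 1) := by
  unfold jj
  have h1 : Filter.Tendsto (fun N : ℕ => -nsq k / 2 / (N : ℝ)) Filter.atTop (nhds 0) :=
    tendsto_const_div_atTop_nhds_zero_nat _
  have h2 := (Real.continuous_exp.tendsto 0).comp h1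
  rw [Real.exp_zero] at h2
  refine h2.congr fun N => ?_
  simp only [Function.comp]
  rw [div_div]

lemma Vc_conj (u : (Fin 2 → ℝ) → (Fin 2 → ℝ)) (i : Fin 2) (m : Fin 2 → ℤ) :
    Vc u i (-m) = (starRingEnd ℂ) (Vc u i m) := by
  unfold Vc
  rw [← integral_conj]
  congr 1
  ext x
  rw [map_mul, Complex.conj_ofReal, ee_neg]

lemma mem_Lam_eventually (k : Fin 2 → ℤ) (hk : k ≠ 0) :
    ∀ᶠ N in Filter.atTop, k ∈ Lam N := by
  filter_upwards [Filter.eventually_ge_atTop ((k 0).natAbs + (k 1).natAbs)] with N hN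
  simp only [Lam, box, Finset.mem_erase, Fintype.mem_piFinset, Finset.mem_Icc]
  refine ⟨hk, fun i => ?_⟩
  fin_cases i
  · simp only [Fin.zero_eta]
    omega
  · simp only [Fin.mk_one]
    omega

lemma om_zero (u : (Fin 2 → ℝ) → (Fin 2 → ℝ)) (hu : Measurable u) (hL : L21 u < ⊤)
    (hu1 : ∀ i, Integrable (fun x => u x i) (volume.restrict T2))
    (hu2 : ∀ i j, Integrable (fun x => u x i * u x j) (volume.restrict T2))
    (hd : ∀ k : Fin 2 → ℤ, (k 0 : ℂ) * Vc u 0 k + (k 1 : ℂ) * Vc u 1 k = 0)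
    (hNS : ∀ k p : Fin 2 → ℤ, p 0 * k 0 + p 1 * k 1 = 0 →
      -(nsq k : ℂ) * ∑ j, (p j : ℂ) * Vc u j k
        + Complex.I * ∑ i, ∑ j, (k i : ℂ) * (p j : ℂ) * Qc u i j k = 0)
    (h0 : ∀ i, Vc u i 0 = 0) (k₀ : Fin 2 → ℤ) (hk₀ : k₀ ≠ 0) : om u k₀ = 0 := by
  obtain ⟨S, hS, hap⟩ := apriori u hu hL hu1
  have htu : ∀ j, MemLp (fun x => (tu u j x : ℂ)) 2 (volume.restrict T2) := by
    intro j
    have h : MemLp (fun x => tu u j x) 2 (volume.restrict T2) := by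
      unfold tu
      split_ifs
      · exact memLp_comp u hu hL 1
      · exact (memLp_comp u hu hL 0).neg
    exact h.ofReal
  have hE : ∀ j, Filter.Tendsto (fun N => ∫ x in T2, ‖(tu u j x : ℂ) - Wf u N j x‖ ^ 2)
      Filter.atTop (nhds 0) := by
    intro j
    refine L2_approx _ (htu j) (fun N k => jj N k * jj N k)
      (fun N k => (mul_pos (jj_pos N k) (jj_pos N k)).le)
      (fun N k => mul_le_one₀ (jj_le_one N k) (jj_pos N k).le (jj_le_one N k)) fun k => ?_
    simpa using (jj_tendsto k).mul (jj_tendsto k)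
  have hWm : ∀ N j, MemLp (fun x => (tu u j x : ℂ) - Wf u N j x) 2 (volume.restrict T2) := by
    intro N j
    refine (htu j).sub ?_
    obtain ⟨C, hC⟩ := (isCompact_Icc (a := (0 : Fin 2 → ℝ))
      (b := fun _ => 2 * π)).exists_bound_of_continuousOn (continuous_Wf u N j).continuousOn
    refine MemLp.of_bound (continuous_Wf u N j).aestronglyMeasurable C ?_
    refine (ae_restrict_iff' measurableSet_T2).2 (Filter.Eventually.of_forall fun x hx => ?_)
    exact hC x (Set.Ico_subset_Icc_self hx)
  -- the elementary bound
  have hterm : ∀ N c, (∀ a b x, ‖Hf N c a b x‖ ≤ S) → ∀ η : ℝ, 0 < η → ∀ i j,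
      ‖∫ x in T2, (u x i : ℂ) * Hf N c i j x * ((tu u j x : ℂ) - Wf u N j x)‖
        ≤ S * (η * (∫ x in T2, u x i * u x i) + η⁻¹ * ∫ x in T2, ‖(tu u j x : ℂ) - Wf u N j x‖ ^ 2) := by
    intro N c hH η hη i j
    have hW2 : Integrable (fun x => ‖(tu u j x : ℂ) - Wf u N j x‖ ^ 2) (volume.restrict T2) :=
      (hWm N j).integrable_norm_pow (by norm_num)
    refine (norm_integral_le_integral_norm _).trans ?_
    rw [← integral_const_mul, ← integral_const_mul,
      ← integral_add ((hu2 i i).const_mul η) (hW2.const_mul η⁻¹), ← integral_const_mul]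
    refine integral_mono_of_nonneg (Filter.Eventually.of_forall fun x => norm_nonneg _)
      ((((hu2 i i).const_mul η).add (hW2.const_mul η⁻¹)).const_mul S)
      (Filter.Eventually.of_forall fun x => ?_)
    simp only [norm_mul, Complex.norm_real, Real.norm_eq_abs]
    have hh := hH i j x
    have e : u x i * u x i = |u x i| * |u x i| := (abs_mul_abs_self _).symm
    rw [e]
    have hgen : ∀ g : ℝ, 0 ≤ g → |u x i| * ‖Hf N c i j x‖ * g
        ≤ S * (η * (|u x i| * |u x i|) + η⁻¹ * g ^ 2) := by
      intro g hg
      have h1 : |u x i| * g ≤ η * (|u x i| * |u x i|) + η⁻¹ * g ^ 2 := by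
        have h2 : 0 ≤ η⁻¹ * (η * |u x i| - g) ^ 2 := by positivity
        have h3 : η⁻¹ * (η * |u x i| - g) ^ 2
            = η * (|u x i| * |u x i|) + η⁻¹ * g ^ 2 - 2 * (|u x i| * g) := by
          field_simp
          ring
        have h4 : 0 ≤ |u x i| * g := by positivity
        linarith
      calc |u x i| * ‖Hf N c i j x‖ * g = ‖Hf N c i j x‖ * (|u x i| * g) := by ring
        _ ≤ S * (|u x i| * g) := mul_le_mul_of_nonneg_right hh (by positivity)
        _ ≤ _ := mul_le_mul_of_nonneg_left h1 hS
    exact hgen _ (norm_nonneg _)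
  set A : ℝ := ∑ i, ∑ _j : Fin 2, ∫ x in T2, u x i * u x i with hA
  have hA0 : 0 ≤ A := Finset.sum_nonneg fun i _ => Finset.sum_nonneg fun _ _ =>
    integral_nonneg fun x => mul_self_nonneg _
  have hmain : ∀ η : ℝ, 0 < η → ‖om u k₀ / (nsq k₀ : ℂ)‖ ≤ S * (η * A) := by
    intro η hη
    have hlim1 : Filter.Tendsto (fun N => ‖(jj N k₀ : ℂ) * om u k₀ / (nsq k₀ : ℂ)‖) Filter.atTop
        (nhds ‖om u k₀ / (nsq k₀ : ℂ)‖) := by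
      have h1 : Filter.Tendsto (fun N => ((jj N k₀ : ℝ) : ℂ)) Filter.atTop (nhds ((1 : ℝ) : ℂ)) :=
        (Complex.continuous_ofReal.tendsto 1).comp (jj_tendsto k₀)
      have h2 := ((h1.mul_const (om u k₀)).div_const (nsq k₀ : ℂ)).norm
      simpa using h2
    have hlim2 : Filter.Tendsto (fun N => ∑ i, ∑ j,
        S * (η * (∫ x in T2, u x i * u x i) + η⁻¹ * ∫ x in T2, ‖(tu u j x : ℂ) - Wf u N j x‖ ^ 2))
        Filter.atTop (nhds (∑ i, ∑ _j : Fin 2,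
          S * (η * (∫ x in T2, u x i * u x i) + η⁻¹ * 0))) :=
      tendsto_finsetSum _ fun i _ => tendsto_finsetSum _ fun j _ =>
        (((hE j).const_mul η⁻¹).const_add _).const_mul S
    have e : (∑ i, ∑ _j : Fin 2, S * (η * (∫ x in T2, u x i * u x i) + η⁻¹ * 0)) = S * (η * A) := by
      rw [hA, Finset.mul_sum, Finset.mul_sum]
      refine Finset.sum_congr rfl fun i _ => ?_
      rw [Finset.mul_sum, Finset.mul_sum]
      refine Finset.sum_congr rfl fun j _ => ?_
      rw [mul_zero, add_zero]
    rw [← e]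
    refine le_of_tendsto_of_tendsto hlim1 hlim2 ?_
    filter_upwards [mem_Lam_eventually k₀ hk₀, Filter.eventually_ge_atTop 1] with N hN hN1
    obtain ⟨c, hc1, hc2⟩ := galerkin (Vc u) (Vc_conj u) hd (1 / (2 * π) ^ 2) N k₀
    have hc : IsGal u N k₀ c := ⟨hc1, hc2⟩
    rw [key_identity u hu1 hu2 N hd hNS h0 k₀ c hc hN, norm_mul, Complex.norm_I, one_mul]
    refine (norm_sum_le _ _).trans (Finset.sum_le_sum fun i _ => ?_)
    refine (norm_sum_le _ _).trans (Finset.sum_le_sum fun j _ => ?_)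
    exact hterm N c (hap N hN1 k₀ c hc) η hη i j
  have hz : ‖om u k₀ / (nsq k₀ : ℂ)‖ ≤ 0 := by
    refine le_of_forall_pos_le_add fun ε hε => ?_
    have := hmain (ε / (S * A + 1)) (by positivity)
    refine this.trans ?_
    rw [zero_add]
    have h3 : S * (ε / (S * A + 1) * A) = ε * ((S * A) / (S * A + 1)) := by ring
    rw [h3]
    refine mul_le_of_le_one_right hε.le ?_
    rw [div_le_one (by positivity)]
    linarith
  have hz' := norm_le_zero_iff.1 hz
  rcases div_eq_zero_iff.1 hz' with h | h
  · exact h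
  · exfalso
    have := one_le_nsq' hk₀
    have h' : nsq k₀ = 0 := by exact_mod_cast h
    linarith

lemma final (u : (Fin 2 → ℝ) → (Fin 2 → ℝ)) (hu : Measurable u) (hL : L21 u < ⊤)
    (hV : ∀ i k, Vc u i k = 0) : ∀ᵐ x ∂(volume.restrict T2), u x = 0 := by
  have hi : ∀ i, ∀ᵐ x ∂(volume.restrict T2), u x i = 0 := by
    intro i
    have hm : MemLp (fun x => (u x i : ℂ)) 2 (volume.restrict T2) := (memLp_comp u hu hL i).ofReal
    have h1 := L2_approx _ hm (fun _ _ => 1) (fun _ _ => zero_le_one) (fun _ _ => le_rfl)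
      (fun k => tendsto_const_nhds)
    have hf : ∀ k, fc (fun x => (u x i : ℂ)) k = 0 := by
      intro k
      have := hV i (-k)
      unfold Vc at this
      unfold fc
      simp_rw [mul_comm (ee (-k) _)]
      rw [this, mul_zero]
    simp only [hf, mul_zero, zero_mul, Finset.sum_const_zero, sub_zero] at h1
    have h2 := tendsto_nhds_unique h1 tendsto_const_nhds
    have h3 : Integrable (fun x => ‖(u x i : ℂ)‖ ^ 2) (volume.restrict T2) :=
      hm.integrable_norm_pow (by norm_num)
    rw [eq_comm, integral_eq_zero_iff_of_nonneg (fun x => by positivity) h3] at h2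
    filter_upwards [h2] with x hx
    simpa using hx
  filter_upwards [hi 0, hi 1] with x hx0 hx1
  funext i
  fin_cases i
  · exact hx0
  · exact hx1

theorem steady_L21_trivial
    (u : (Fin 2 → ℝ) → (Fin 2 → ℝ)) (hu_meas : Measurable u) (hu_per : PerF 2 u)
    (hu_L21 : L21 u < ⊤)
    (hu_mean : ∫ x in T2, u x = 0)
    (hu_div : ∀ ψ : (Fin 2 → ℝ) → ℝ, ContDiff ℝ (⊤ : ℕ∞) ψ → PerF 2 ψ →
      ∫ x in T2, (∑ i, u x i * pd 2 i ψ x) = 0)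
    (hu_NS : ∀ φ : (Fin 2 → ℝ) → (Fin 2 → ℝ), ContDiff ℝ (⊤ : ℕ∞) φ → PerF 2 φ →
      (∀ x, divg 2 φ x = 0) →
      (∫ x in T2, (∑ j, u x j * lap 2 (fun y => φ y j) x))
        + ∑ i, ∑ j, ∫ x in T2, u x i * u x j * pd 2 i (fun y => φ y j) x = 0) :
    ∀ᵐ x ∂(volume.restrict T2), u x = 0 := by
  have hm : ∀ i, MemLp (fun x => u x i) 2 (volume.restrict T2) := memLp_comp u hu_meas hu_L21
  have hu1 : ∀ i, Integrable (fun x => u x i) (volume.restrict T2) := fun i =>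
    (hm i).integrable (by norm_num)
  have hu2 : ∀ i j, Integrable (fun x => u x i * u x j) (volume.restrict T2) := fun i j =>
    (hm i).integrable_mul (hm j)
  have hd := div_fourier u hu1 hu_div
  have hNS := NS_fourier u hu1 hu2 hu_NS
  have h0 : ∀ i, Vc u i 0 = 0 := by
    intro i
    have h1 : ∫ x in T2, u x i = 0 := by
      have := eval_integral (μ := volume.restrict T2) (f := fun x i => u x i) hu1 i
      rw [← this, hu_mean]
      rfl
    unfold Vc
    simp_rw [ee_zero, mul_one]
    rw [integral_complex_ofReal, h1]
    rfl
  refine final u hu_meas hu_L21 fun i k => ?_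
  by_cases hk : k = 0
  · rw [hk]
    exact h0 i
  · have ho := om_zero u hu_meas hu_L21 hu1 hu2 hd hNS h0 k hk
    have h1 := hd k
    have hn : (nsq k : ℂ) ≠ 0 := by
      have := one_le_nsq' hk
      exact_mod_cast (by linarith : nsq k ≠ 0)
    have hn2 : (nsq k : ℂ) = (k 0 : ℂ) ^ 2 + (k 1 : ℂ) ^ 2 := by
      simp [nsq]
    unfold om at ho
    fin_cases i
    · refine (mul_eq_zero.1 (?_ : (nsq k : ℂ) * Vc u 0 k = 0)).resolve_left hn
      rw [hn2]
      linear_combination (k 0 : ℂ) * h1 - (k 1 : ℂ) * ho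
    · refine (mul_eq_zero.1 (?_ : (nsq k : ℂ) * Vc u 1 k = 0)).resolve_left hn
      rw [hn2]
      linear_combination (k 1 : ℂ) * h1 + (k 0 : ℂ) * ho
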